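/- arXiv:2412.00336 — 2 statements merged into one kernel-verified Lean document; each statement's English description precedes it below -/
import Mathlib

section
/- For every permutation ijk of {1,2,3} and all n ≥ 1, the number of nonnesting permutations of the multiset {1,1,2,2,…,n,n} that avoid the length-4 pattern ijjk (obtained from ijk by duplicating its middle letter) equals C_n², the square of the nth Catalan number. -/
/-- `w` is a permutation of the multiset `{1,1,2,2,…,n,n}`:
a word in which every value in `{1,…,n}` occurs exactly twice
and no other value occurs. -/
def IsMultisetPerm (n : ℕ) (w : List ℕ) : Prop :=
  ∀ i : ℕ, w.count i = if 1 ≤ i ∧ i ≤ n then 2 else 0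

/-- `t` is order-isomorphic to the word `σ`:
same length, and entries compare (both `<` and `=`) in the same way. -/
def OrderIsoWord (t σ : List ℕ) : Prop :=
  t.length = σ.length ∧
  ∀ r s : ℕ, r < σ.length → s < σ.length →
    ((t.getD r 0 < t.getD s 0 ↔ σ.getD r 0 < σ.getD s 0) ∧
     (t.getD r 0 = t.getD s 0 ↔ σ.getD r 0 = σ.getD s 0))

/-- `w` contains the pattern `σ`: some subsequence of `w`
is order-isomorphic to `σ`. -/
def Contains (w σ : List ℕ) : Prop :=
  ∃ t : List ℕ, t.Sublist w ∧ OrderIsoWord t σ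

/-- `w` avoids the pattern `σ`. -/
def Avoids (w σ : List ℕ) : Prop := ¬ Contains w σ

/-- `w` is a nonnesting permutation of `{1,1,2,2,…,n,n}`:
it avoids the patterns `1221` and `2112`. -/
def IsNonnesting (n : ℕ) (w : List ℕ) : Prop :=
  IsMultisetPerm n w ∧ Avoids w [1,2,2,1] ∧ Avoids w [2,1,1,2]


def isP : ℕ → ℕ → List Bool → Prop
  | h, r, [] => h = 0 ∧ r = 0
  | h, r, true :: d => 1 ≤ r ∧ isP (h + 1) (r - 1) d
  | h, r, false :: d => 1 ≤ h ∧ isP (h - 1) r d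

def gB : ℕ → ℕ → ℕ
  | 0, 0 => 1
  | h + 1, 0 => gB h 0
  | 0, r + 1 => gB 1 r
  | h + 1, r + 1 => gB h (r + 1) + gB (h + 2) r
termination_by h r => (r, h)

theorem gB_zero (h : ℕ) : gB h 0 = 1 := by
  induction h with
  | zero => simp [gB]
  | succ h ih => rw [gB, ih]

theorem gB_choose (r : ℕ) : ∀ h, gB h (r + 1) + (2 * r + h + 2).choose r
    = (2 * r + h + 2).choose (r + 1) := by
  induction r with
  | zero =>
    intro h
    induction h with
    | zero => simp [gB]
    | succ h ih =>
      rw [gB, gB_zero]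
      simp at ih ⊢
      omega
  | succ r ihr =>
    intro h
    induction h with
    | zero =>
      rw [gB]
      have h1 := ihr 1
      have e1 : (2 * (r + 1) + 0 + 2).choose (r + 1) = (2 * r + 3).choose r
        + (2 * r + 3).choose (r + 1) := Nat.choose_succ_succ _ _
      have e2 : (2 * (r + 1) + 0 + 2).choose (r + 1 + 1) = (2 * r + 3).choose (r + 1)
        + (2 * r + 3).choose (r + 1 + 1) := Nat.choose_succ_succ _ _
      have e3 : (2 * r + 3).choose (r + 1) = (2 * r + 3).choose (r + 1 + 1) := by
        apply Nat.choose_symm_of_eq_add; omega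
      have e4 : 2 * r + 1 + 2 = 2 * r + 3 := by ring
      rw [e4] at h1
      omega
    | succ h ih =>
      rw [gB]
      have h1 := ihr (h + 2)
      have e1 : (2 * (r + 1) + (h + 1) + 2).choose (r + 1) = (2 * r + h + 4).choose r
        + (2 * r + h + 4).choose (r + 1) := by
        rw [← Nat.choose_succ_succ]; congr 1; omega
      have e2 : (2 * (r + 1) + (h + 1) + 2).choose (r + 1 + 1) = (2 * r + h + 4).choose (r + 1)
        + (2 * r + h + 4).choose (r + 1 + 1) := by
        rw [← Nat.choose_succ_succ]; congr 1; omega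
      have e3 : 2 * r + (h + 2) + 2 = 2 * r + h + 4 := by ring
      have e4 : 2 * (r + 1) + h + 2 = 2 * r + h + 4 := by ring
      rw [e3] at h1
      rw [e4] at ih
      omega

theorem gB_catalan (n : ℕ) : gB 0 n = catalan n := by
  cases n with
  | zero => simp [gB]
  | succ r =>
    have h1 := gB_choose r 0
    have h2 := succ_mul_catalan_eq_centralBinom (r + 1)
    rw [Nat.centralBinom] at h2
    have e : 2 * r + 0 + 2 = 2 * (r + 1) := by ring
    rw [e] at h1
    have h3 := Nat.choose_succ_right_eq (2 * (r + 1)) r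
    have e2 : 2 * (r + 1) - r = r + 2 := by omega
    rw [e2] at h3
    have : (r + 1 + 1) * gB 0 (r + 1) = (r + 1 + 1) * catalan (r + 1) := by
      rw [h2]
      nlinarith
    exact Nat.eq_of_mul_eq_mul_left (by omega) this

theorem isP_encard (r : ℕ) : ∀ h, {d | isP h r d}.encard = (gB h r : ℕ∞) := by
  have inj : ∀ b : Bool, Function.Injective (fun d : List Bool => b :: d) := by
    intro b x y h; simpa using h
  have disj : ∀ s t : Set (List Bool), Disjoint ((fun d => true :: d) '' s)
      ((fun d => false :: d) '' t) := by
    intro s t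
    rw [Set.disjoint_left]
    rintro _ ⟨x, _, rfl⟩ ⟨y, _, h⟩
    simp at h
  induction r with
  | zero =>
    intro h
    induction h with
    | zero =>
      have : {d | isP 0 0 d} = {[]} := by
        ext d
        rcases d with _ | ⟨_ | _, d⟩ <;> simp [isP]
      rw [this]; simp [gB]
    | succ h ih =>
      have : {d | isP (h + 1) 0 d} = (fun d => false :: d) '' {d | isP h 0 d} := by
        ext d
        rcases d with _ | ⟨_ | _, d⟩ <;> simp [isP]
      rw [this, (inj _).encard_image, ih, gB]
  | succ r ihr =>
    intro h
    induction h with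
    | zero =>
      have : {d | isP 0 (r + 1) d} = (fun d => true :: d) '' {d | isP 1 r d} := by
        ext d
        rcases d with _ | ⟨_ | _, d⟩ <;> simp [isP]
      rw [this, (inj _).encard_image, ihr, gB]
    | succ h ih =>
      have : {d | isP (h + 1) (r + 1) d} = (fun d => true :: d) '' {d | isP (h + 2) r d} ∪
          (fun d => false :: d) '' {d | isP h (r + 1) d} := by
        ext d
        rcases d with _ | ⟨_ | _, d⟩ <;> simp [isP]
      rw [this, Set.encard_union_eq (disj _ _), (inj _).encard_image, (inj _).encard_image,
        ihr, ih, gB]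
      push_cast
      rw [add_comm]

def weave : List Bool → List ℕ → List ℕ → List ℕ
  | true :: d, Q, x :: a => x :: weave d (Q ++ [x]) a
  | false :: d, x :: Q, a => x :: weave d Q a
  | _, _, _ => []

theorem weave_inj (d : List Bool) : ∀ d' Q a a', isP Q.length a.length d →
    isP Q.length a'.length d' → (Q ++ a).Nodup → (Q ++ a').Nodup →
    weave d Q a = weave d' Q a' → d = d' ∧ a = a' := by
  induction d with
  | nil =>
    intro d' Q a a' h h' _ _ e
    simp only [isP, List.length_eq_zero_iff] at h
    obtain ⟨rfl, rfl⟩ := h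
    rcases d' with _ | ⟨_ | _, d'⟩
    · simp [isP] at h'; simp [h']
    · simp [isP] at h'
    · rcases a' with _ | ⟨x, a'⟩
      · simp [isP] at h'
      · simp [weave] at e
  | cons b d ih =>
    intro d' Q a a' h h' n n' e
    cases b with
    | true =>
      rcases a with _ | ⟨x, a⟩
      · simp [isP] at h
      rcases d' with _ | ⟨_ | _, d'⟩
      · simp [weave] at e
      · rcases Q with _ | ⟨y, Q⟩
        · simp [isP] at h'
        · simp only [weave, List.cons.injEq] at e
          simp [e.1] at n
      · rcases a' with _ | ⟨x', a'⟩
        · simp [isP] at h'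
        simp only [weave, List.cons.injEq] at e
        obtain ⟨rfl, e⟩ := e
        simp only [isP, List.length_cons, Nat.add_sub_cancel] at h h'
        have := ih d' (Q ++ [x]) a a' (by simpa using h.2) (by simpa using h'.2)
          (by simpa using n) (by simpa using n') e
        simp [this]
    | false =>
      rcases Q with _ | ⟨y, Q⟩
      · simp [isP] at h
      rcases d' with _ | ⟨_ | _, d'⟩
      · simp [weave] at e
      · simp only [weave, List.cons.injEq, true_and] at e
        simp only [isP, List.length_cons, Nat.add_sub_cancel] at h h'
        have := ih d' Q a a' h.2 h'.2 (by simp at n ⊢; tauto) (by simp at n' ⊢; tauto) e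
        simp [this]
      · rcases a' with _ | ⟨x', a'⟩
        · simp [isP] at h'
        simp only [weave, List.cons.injEq] at e
        simp [e.1] at n'

theorem weave_surj (w : List ℕ) : ∀ Q : List ℕ, Q.Nodup →
    (∀ x, (Q ++ w).count x = 0 ∨ (Q ++ w).count x = 2) →
    (∀ x y, x ≠ y → ¬ [x, y, y, x].Sublist (Q ++ w)) →
    ∃ d a, isP Q.length a.length d ∧ (Q ++ a).Nodup ∧ weave d Q a = w ∧
      ∀ y, y ∈ Q ++ a ↔ y ∈ Q ++ w := by
  induction w with
  | nil =>
    intro Q hQ hc _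
    have : Q = [] := by
      rw [List.eq_nil_iff_forall_not_mem]
      intro x hx
      have h1 := List.count_eq_one_of_mem hQ hx
      have := hc x
      simp [h1] at this
    subst this
    exact ⟨[], [], by simp [isP, weave]⟩
  | cons x w ih =>
    intro Q hQ hc hn
    by_cases hx : x ∈ Q
    · rcases Q with _ | ⟨y, Q⟩
      · simp at hx
      have hxy : x = y := by
        by_contra hne
        have hxQ : x ∈ Q := by simpa [hne] using hx
        have h1 := List.count_eq_one_of_mem hQ (List.mem_cons_self (a := y) (l := Q))
        have h2 := hc y
        rw [List.count_append, h1, List.count_cons_of_ne hne] at h2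
        have hyw : y ∈ w := by
          rw [← List.count_pos_iff]; omega
        apply hn y x (Ne.symm hne)
        have : ([y, x] ++ [x, y]).Sublist ((y :: Q) ++ (x :: w)) := by
          apply List.Sublist.append
          · simpa using hxQ
          · simpa using hyw
        simpa using this
      subst hxy
      have hxQ : x ∉ Q := (List.nodup_cons.1 hQ).1
      have hsub : (Q ++ w).Sublist ((x :: Q) ++ (x :: w)) :=
        List.Sublist.append (List.sublist_cons_self _ _) (List.sublist_cons_self _ _)
      have hx0 : (Q ++ w).count x = 0 := by
        have := hc x
        simp [List.count_append] at this
        rw [List.count_append]; omega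
      have hxw : x ∉ Q ++ w := by rwa [List.count_eq_zero] at hx0
      obtain ⟨d, a, h1, h2, h3, h4⟩ := ih Q (List.nodup_cons.1 hQ).2 (by
        intro z
        by_cases hz : z = x
        · left; rw [hz]; exact hx0
        · have := hc z
          simpa [List.count_append, List.count_cons_of_ne (Ne.symm hz)] using this)
        (fun z y hzy hs => hn z y hzy (hs.trans hsub))
      refine ⟨false :: d, a, by simpa [isP] using h1, ?_, by simp [weave, h3], ?_⟩
      · rw [List.cons_append, List.nodup_cons]
        exact ⟨fun h => hxw ((h4 x).1 h), h2⟩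
      · intro y
        have := h4 y
        simp at this ⊢
        tauto
    · have e : (Q ++ [x]) ++ w = Q ++ x :: w := by simp
      obtain ⟨d, a, h1, h2, h3, h4⟩ := ih (Q ++ [x])
        (by rw [List.nodup_append]; simp [hQ]; rintro a ha rfl; exact hx ha)
        (by rwa [e]) (by rwa [e])
      refine ⟨true :: d, x :: a, by simpa [isP] using h1, by simpa using h2,
        by simp [weave, h3], ?_⟩
      intro y
      simpa using h4 y

theorem weave_count (d : List Bool) : ∀ Q a, isP Q.length a.length d → (Q ++ a).Nodup →
    ∀ x, (Q ++ weave d Q a).count x = if x ∈ Q ++ a then 2 else 0 := by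
  induction d with
  | nil =>
    intro Q a h _ x
    simp only [isP, List.length_eq_zero_iff] at h
    obtain ⟨rfl, rfl⟩ := h
    simp [weave]
  | cons b d ih =>
    intro Q a h n x
    cases b with
    | true =>
      rcases a with _ | ⟨x', a⟩
      · simp [isP] at h
      have := ih (Q ++ [x']) a (by simpa [isP] using h) (by simpa using n) x
      simpa [weave] using this
    | false =>
      rcases Q with _ | ⟨y, Q⟩
      · simp [isP] at h
      have n' := n
      rw [List.cons_append, List.nodup_cons] at n'
      have := ih Q a (by simpa [isP] using h) n'.2 x
      rw [List.count_append] at this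
      simp only [weave, List.count_append, List.count_cons, List.cons_append, List.mem_cons]
      by_cases hx : x = y
      · subst hx
        rw [if_neg n'.1] at this
        simp; omega
      · have hx' : y ≠ x := Ne.symm hx
        simp only [hx, false_or, beq_iff_eq, hx', if_false]
        omega

theorem weave_key (d : List Bool) : ∀ Q a, isP Q.length a.length d → (Q ++ a).Nodup →
    ∀ x y, [x, y].Sublist (Q ++ a) → [x, y, y].Sublist (Q ++ weave d Q a) ∧
      [x, x, y].Sublist (Q ++ weave d Q a) := by
  induction d with
  | nil =>
    intro Q a h _ x y hs
    simp only [isP, List.length_eq_zero_iff] at h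
    obtain ⟨rfl, rfl⟩ := h
    simp at hs
  | cons b d ih =>
    intro Q a h n x y hs
    cases b with
    | true =>
      rcases a with _ | ⟨x', a⟩
      · simp [isP] at h
      have := ih (Q ++ [x']) a (by simpa [isP] using h) (by simpa using n) x y (by simpa using hs)
      simpa [weave] using this
    | false =>
      rcases Q with _ | ⟨q, Q⟩
      · simp [isP] at h
      have n' := n
      rw [List.cons_append, List.nodup_cons] at n'
      have hP : isP Q.length a.length d := by simpa [isP] using h
      simp only [weave]
      have hsub : (Q ++ weave d Q a).Sublist ((q :: Q) ++ q :: weave d Q a) :=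
        List.Sublist.append (List.sublist_cons_self _ _) (List.sublist_cons_self _ _)
      rw [List.cons_append, List.sublist_cons_iff] at hs
      rcases hs with hs | ⟨r, hr, hs⟩
      · have := ih Q a hP n'.2 x y hs
        exact ⟨this.1.trans hsub, this.2.trans hsub⟩
      · simp only [List.cons.injEq] at hr
        obtain ⟨rfl, rfl⟩ := hr
        have hy : y ∈ Q ++ a := by simpa using hs
        have hc := weave_count d Q a hP n'.2 y
        rw [if_pos hy] at hc
        constructor
        · rw [List.cons_append]
          apply List.Sublist.cons_cons
          have h1 : (List.replicate 2 y).Sublist (Q ++ weave d Q a) := by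
            rw [List.replicate_sublist_iff]; omega
          exact h1.trans (List.Sublist.append (List.Sublist.refl _) (List.sublist_cons_self _ _))
        · rw [List.count_append] at hc
          have hQ : Q.count y ≤ 1 := List.nodup_iff_count_le_one.1 (List.nodup_append.1 n'.2).1 y
          have hyw : y ∈ weave d Q a := by rw [← List.count_pos_iff]; omega
          rw [List.cons_append]
          apply List.Sublist.cons_cons
          have : ([x, y]).Sublist (x :: weave d Q a) := by simpa using hyw
          exact this.trans (List.sublist_append_right _ _)

theorem comb4 (u : List ℕ) (x y z : ℕ) (hxy : x ≠ y) : u.count y ≤ 2 →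
    [x, y, y].Sublist u → [y, y, z].Sublist u → [x, y, y, z].Sublist u := by
  induction u with
  | nil => simp
  | cons a u ih =>
    intro hc h1 h2
    by_cases hax : a = x
    · subst hax
      rw [List.sublist_cons_iff] at h2
      rcases h2 with h2 | ⟨r, hr, _⟩
      · exact h2.cons_cons a
      · simp at hr; exact absurd hr.1.symm hxy
    · rw [List.sublist_cons_iff] at h1
      rcases h1 with h1 | ⟨r, hr, _⟩
      swap
      · simp at hr; exact absurd hr.1.symm hax
      have hcu : 2 ≤ u.count y := by
        have := h1.count_le y
        simp [List.count_cons, hxy] at this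
        exact this
      have hay : a ≠ y := by
        rintro rfl
        simp at hc; omega
      rw [List.count_cons_of_ne hay] at hc
      rw [List.sublist_cons_iff] at h2
      rcases h2 with h2 | ⟨r, hr, _⟩
      · exact (ih hc h1 h2).cons a
      · simp at hr; exact absurd hr.1.symm hay

theorem comb3 (u : List ℕ) (x y z : ℕ) (hxy : x ≠ y) : u.Nodup →
    [x, y].Sublist u → [y, z].Sublist u → [x, y, z].Sublist u := by
  induction u with
  | nil => simp
  | cons a u ih =>
    intro hc h1 h2
    rw [List.nodup_cons] at hc
    by_cases hax : a = x
    · subst hax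
      rw [List.sublist_cons_iff] at h2
      rcases h2 with h2 | ⟨r, hr, _⟩
      · exact h2.cons_cons a
      · simp at hr; exact absurd hr.1.symm hxy
    · rw [List.sublist_cons_iff] at h1
      rcases h1 with h1 | ⟨r, hr, _⟩
      swap
      · simp at hr; exact absurd hr.1.symm hax
      have hay : a ≠ y := by
        rintro rfl
        exact hc.1 (h1.subset (by simp))
      rw [List.sublist_cons_iff] at h2
      rcases h2 with h2 | ⟨r, hr, _⟩
      · exact (ih hc.2 h1 h2).cons a
      · simp at hr; exact absurd hr.1.symm hay

theorem contraL (u : List ℕ) (x y : ℕ) (hxy : x ≠ y) : u.count x ≤ 2 → u.count y ≤ 2 →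
    [x, y, y].Sublist u → [y, x, x].Sublist u → False := by
  induction u with
  | nil => simp
  | cons a u ih =>
    intro hx hy h1 h2
    rw [List.sublist_cons_iff] at h1 h2
    rcases h1 with h1 | ⟨r, hr, h1⟩
    · rcases h2 with h2 | ⟨r, hr, h2⟩
      · exact ih ((List.count_le_count_cons).trans hx) ((List.count_le_count_cons).trans hy) h1 h2
      · simp at hr
        have := h1.count_le y
        simp [List.count_cons, hxy] at this
        rw [← hr.1] at hy
        simp at hy
        omega
    · simp at hr
      obtain ⟨rfl, rfl⟩ := hr
      rcases h2 with h2 | ⟨r, hr, h2⟩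
      · have := h2.count_le x
        simp [List.count_cons, hxy.symm] at this
        simp at hx
        omega
      · simp at hr; exact hxy hr.1.symm

theorem contraR (u : List ℕ) (x y : ℕ) (hxy : x ≠ y) (hx : u.count x ≤ 2) (hy : u.count y ≤ 2)
    (h1 : [x, x, y].Sublist u) (h2 : [y, y, x].Sublist u) : False := by
  apply contraL u.reverse x y hxy (by simpa using hx) (by simpa using hy)
  · simpa using h2.reverse
  · simpa using h1.reverse

theorem pair_or (p : List ℕ) (x y : ℕ) (hxy : x ≠ y) : x ∈ p → y ∈ p →
    [x, y].Sublist p ∨ [y, x].Sublist p := by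
  induction p with
  | nil => simp
  | cons a p ih =>
    intro hx hy
    by_cases hax : a = x
    · subst hax
      left
      simpa [hxy.symm] using hy
    by_cases hay : a = y
    · subst hay
      right
      simpa [hxy] using hx
    · rcases ih (by simpa [Ne.symm hax] using hx) (by simpa [Ne.symm hay] using hy) with h | h
      · exact Or.inl (h.cons a)
      · exact Or.inr (h.cons a)

theorem weave_nonnest (d : List Bool) (p : List ℕ) (h : isP 0 p.length d) (hp : p.Nodup)
    (x y : ℕ) (hxy : x ≠ y) : ¬ [x, y, y, x].Sublist (weave d [] p) := by
  intro hs
  have hc := weave_count d [] p h hp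
  have hk := weave_key d [] p h hp
  simp only [List.nil_append] at hc hk
  have c2 : ∀ z, (weave d [] p).count z ≤ 2 := by intro z; rw [hc]; split_ifs <;> omega
  have mem : ∀ z, z ∈ weave d [] p → z ∈ p := by
    intro z hz
    by_contra hn
    have := hc z
    rw [if_neg hn, List.count_eq_zero] at this
    exact this hz
  rcases pair_or p x y hxy (mem x (hs.subset (by simp))) (mem y (hs.subset (by simp))) with h | h
  · exact contraR _ x y hxy (c2 x) (c2 y) (hk x y h).2 ((List.sublist_cons_self _ _).trans hs)
  · refine contraL _ x y hxy (c2 x) (c2 y) (List.Sublist.trans ?_ hs) (hk y x h).1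
    exact (List.sublist_append_left [x, y, y] [x])

theorem weave_pattern (d : List Bool) (p : List ℕ) (h : isP 0 p.length d) (hp : p.Nodup)
    (x y z : ℕ) (hxy : x ≠ y) (hyz : y ≠ z) :
    [x, y, y, z].Sublist (weave d [] p) ↔ [x, y, z].Sublist p := by
  have hc := weave_count d [] p h hp
  have hk := weave_key d [] p h hp
  simp only [List.nil_append] at hc hk
  have c2 : ∀ z, (weave d [] p).count z ≤ 2 := by intro z; rw [hc]; split_ifs <;> omega
  have mem : ∀ z, z ∈ weave d [] p → z ∈ p := by
    intro z hz
    by_contra hn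
    have := hc z
    rw [if_neg hn, List.count_eq_zero] at this
    exact this hz
  constructor
  · intro hs
    have h1 : [x, y, y].Sublist (weave d [] p) := (List.sublist_append_left [x, y, y] [z]).trans hs
    have h2 : [y, y, z].Sublist (weave d [] p) := (List.sublist_cons_self _ _).trans hs
    have mx := mem x (hs.subset (by simp))
    have my := mem y (hs.subset (by simp))
    have mz := mem z (hs.subset (by simp))
    apply comb3 p x y z hxy hp
    · rcases pair_or p x y hxy mx my with h | h
      · exact h
      · exact (contraL _ x y hxy (c2 x) (c2 y) h1 (hk y x h).1).elim
    · rcases pair_or p y z hyz my mz with h | h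
      · exact h
      · exact (contraR _ y z hyz (c2 y) (c2 z) h2 (hk z y h).2).elim
  · intro hs
    have h1 : [x, y].Sublist p := (List.sublist_append_left [x, y] [z]).trans hs
    have h2 : [y, z].Sublist p := (List.sublist_cons_self _ _).trans hs
    exact comb4 _ x y z hxy (c2 y) (hk x y h1).1 (hk y z h2).2

def GoodL (S : ℕ → ℕ → Prop) : List ℕ → Prop
  | [] => True
  | x :: p => p.Pairwise (fun a b => a ≤ x → b ≤ x → S a b) ∧ GoodL S p

theorem goodL_iff (S : ℕ → ℕ → Prop) (p : List ℕ) : GoodL S p ↔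
    ∀ c a b, [c, a, b].Sublist p → a ≤ c → b ≤ c → S a b := by
  induction p with
  | nil => simp [GoodL]
  | cons x p ih =>
    rw [GoodL, ih, List.pairwise_iff_forall_sublist]
    constructor
    · rintro ⟨h1, h2⟩ c a b hs
      rw [List.sublist_cons_iff] at hs
      rcases hs with hs | ⟨r, hr, hs⟩
      · exact h2 c a b hs
      · simp at hr
        obtain ⟨rfl, rfl⟩ := hr
        exact h1 hs
    · intro h
      exact ⟨fun {a b} hs => h x a b (hs.cons_cons x), fun c a b hs => h c a b (hs.cons x)⟩

theorem good_le (S : ℕ → ℕ → Prop) (M x : ℕ) (p : List ℕ) (hx : x ≤ M) :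
    GoodL S (M :: x :: p) ↔ GoodL S (M :: p) ∧ ∀ y ∈ p, y ≤ M → S x y := by
  simp only [GoodL, List.pairwise_cons]
  constructor
  · rintro ⟨⟨h1, h2⟩, h3, h4⟩
    exact ⟨⟨h2, h4⟩, fun y hy hyM => h1 y hy hx hyM⟩
  · rintro ⟨⟨h2, h4⟩, h1⟩
    exact ⟨⟨fun y hy _ hyM => h1 y hy hyM, h2⟩,
      h2.imp (fun h a b => h (a.trans hx) (b.trans hx)), h4⟩

theorem good_gt (S : ℕ → ℕ → Prop) (M x : ℕ) (p : List ℕ) (hx : M < x) :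
    GoodL S (M :: x :: p) ↔ GoodL S (x :: p) := by
  simp only [GoodL, List.pairwise_cons]
  constructor
  · rintro ⟨⟨h1, h2⟩, h3, h4⟩
    exact ⟨h3, h4⟩
  · rintro ⟨h3, h4⟩
    exact ⟨⟨fun y hy h _ => absurd h (by omega), 
      h3.imp (fun h a b => h (a.trans hx.le) (b.trans hx.le))⟩, h3, h4⟩

def AS (S : ℕ → ℕ → Prop) (H : Finset ℕ) (M r : ℕ) : Set (List ℕ) :=
  {p | p.Nodup ∧ (∀ x, x ∈ p ↔ x ∈ H ∨ (M < x ∧ x ≤ M + r)) ∧ GoodL S (M :: p)}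

def BS (S : ℕ → ℕ → Prop) (H : Finset ℕ) (M r : ℕ) : Set (List ℕ) :=
  {p | p ∈ AS S H M r ∧ ∃ x p', p = x :: p' ∧ M < x}

theorem A_split (S : ℕ → ℕ → Prop) (hS : ∀ a b, S a b → ¬ S b a) (H : Finset ℕ) (M r s : ℕ)
    (hH : ∀ x ∈ H, x ≤ M) (hs : s ∈ H) (hmin : ∀ y ∈ H, y ≠ s → S s y) :
    AS S H M r = (fun p => s :: p) '' AS S (H.erase s) M r ∪ BS S H M r := by
  have hsM := hH s hs
  ext p
  constructor
  · rintro ⟨h1, h2, h3⟩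
    rcases p with _ | ⟨x, p⟩
    · exact absurd ((h2 s).2 (Or.inl hs)) (by simp)
    by_cases hx : M < x
    · exact Or.inr ⟨⟨h1, h2, h3⟩, x, p, rfl, hx⟩
    · left
      rw [good_le _ _ _ _ (by omega)] at h3
      have hxs : x = s := by
        by_contra hne
        have hsp : s ∈ p := by
          have := (h2 s).2 (Or.inl hs)
          simpa [Ne.symm hne] using this
        have hxH : x ∈ H := by
          have := (h2 x).1 (by simp)
          grind
        exact hS _ _ (h3.2 s hsp hsM) (hmin x hxH hne)
      subst hxs
      refine ⟨p, ⟨(List.nodup_cons.1 h1).2, ?_, h3.1⟩, rfl⟩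
      intro y
      have := h2 y
      have := (List.nodup_cons.1 h1).1
      grind
  · rintro (⟨p, ⟨h1, h2, h3⟩, rfl⟩ | h)
    · refine ⟨?_, ?_, ?_⟩
      · rw [List.nodup_cons]
        refine ⟨?_, h1⟩
        rw [h2]
        grind
      · intro y
        have := h2 y
        grind
      · rw [good_le _ _ _ _ hsM]
        refine ⟨h3, fun y hy hyM => ?_⟩
        have := h2 y
        apply hmin y <;> grind
    · exact h.1

theorem A_disj (S : ℕ → ℕ → Prop) (H : Finset ℕ) (M r s : ℕ) (hs : s ≤ M) (X : Set (List ℕ)) :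
    Disjoint ((fun p => s :: p) '' X) (BS S H M r) := by
  rw [Set.disjoint_left]
  rintro _ ⟨p, _, rfl⟩ ⟨_, x, p', h, hx⟩
  simp at h
  omega

theorem B_split (S : ℕ → ℕ → Prop) (H : Finset ℕ) (M r : ℕ)
    (hH : ∀ x ∈ H, x ≤ M) :
    BS S H M (r + 1) = (fun p => (M + 1) :: p) '' AS S H (M + 1) r ∪
      BS S (insert (M + 1) H) (M + 1) r := by
  ext p
  constructor
  · rintro ⟨⟨h1, h2, h3⟩, x, p, rfl, hx⟩
    rw [good_gt _ _ _ _ hx] at h3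
    by_cases hxM : x = M + 1
    · subst hxM
      left
      refine ⟨p, ⟨(List.nodup_cons.1 h1).2, ?_, h3⟩, rfl⟩
      intro y
      have := h2 y
      have := (List.nodup_cons.1 h1).1
      grind
    · right
      refine ⟨⟨h1, ?_, ?_⟩, x, p, rfl, by omega⟩
      · intro y
        have := h2 y
        grind
      · rwa [good_gt _ _ _ _ (by omega)]
  · rintro (⟨p, ⟨h1, h2, h3⟩, rfl⟩ | ⟨⟨h1, h2, h3⟩, x, p, rfl, hx⟩)
    · refine ⟨⟨?_, ?_, ?_⟩, M + 1, p, rfl, by omega⟩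
      · rw [List.nodup_cons]
        refine ⟨?_, h1⟩
        rw [h2]
        grind
      · intro y
        have := h2 y
        grind
      · rwa [good_gt _ _ _ _ (by omega)]
    · refine ⟨⟨h1, ?_, ?_⟩, x, p, rfl, by omega⟩
      · intro y
        have := h2 y
        grind
      · rw [good_gt _ _ _ _ hx] at h3
        rwa [good_gt _ _ _ _ (by omega)]

theorem AS_encard (S : ℕ → ℕ → Prop) (hS : ∀ a b, S a b → ¬ S b a)
    (hmin : ∀ H : Finset ℕ, H.Nonempty → ∃ s ∈ H, ∀ y ∈ H, y ≠ s → S s y) (r : ℕ) :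
    ∀ (h : ℕ) (H : Finset ℕ) (M : ℕ), H.card = h → (∀ x ∈ H, x ≤ M) →
      (AS S H M r).encard = (gB h r : ℕ∞) := by
  have inj : ∀ b : ℕ, Function.Injective (fun d : List ℕ => b :: d) := by
    intro b x y h; simpa using h
  -- step for a nonempty pending set
  have step : ∀ (h r : ℕ) (H : Finset ℕ) (M : ℕ), H.card = h + 1 → (∀ x ∈ H, x ≤ M) →
      (∀ (H' : Finset ℕ), H'.card = h → (∀ x ∈ H', x ≤ M) →
        (AS S H' M r).encard = (gB h r : ℕ∞)) →
      (AS S H M r).encard = (gB h r : ℕ∞) + (BS S H M r).encard := by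
    intro h r H M hc hH ih
    obtain ⟨s, hs, hm⟩ := hmin H (Finset.card_pos.1 (by omega))
    rw [A_split S hS H M r s hH hs hm, Set.encard_union_eq (A_disj S H M r s (hH s hs) _),
      (inj s).encard_image, ih _ (by rw [Finset.card_erase_of_mem hs]; omega)
        (fun x hx => hH x (Finset.mem_of_mem_erase hx))]
  induction r with
  | zero =>
    intro h
    induction h with
    | zero =>
      intro H M hc hH
      rw [Finset.card_eq_zero] at hc
      subst hc
      have : AS S ∅ M 0 = {[]} := by
        ext p
        constructor
        · rintro ⟨h1, h2, h3⟩
          rw [Set.mem_singleton_iff, List.eq_nil_iff_forall_not_mem]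
          intro x hx
          have := (h2 x).1 hx
          grind
        · rintro rfl
          refine ⟨by simp, fun x => ?_, by simp [GoodL]⟩
          grind
      rw [this]; simp [gB]
    | succ h ih =>
      intro H M hc hH
      rw [step h 0 H M hc hH (fun H' h1 h2 => ih H' M h1 h2)]
      have : BS S H M 0 = ∅ := by
        rw [Set.eq_empty_iff_forall_notMem]
        rintro _ ⟨⟨h1, h2, h3⟩, x, p, rfl, hx⟩
        have := h2 x
        grind
      rw [this, gB]; simp
  | succ r ihr =>
    have hB : ∀ (h : ℕ) (H : Finset ℕ) (M : ℕ), H.card = h → (∀ x ∈ H, x ≤ M) →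
        (BS S H M (r + 1)).encard = (gB (h + 1) r : ℕ∞) := by
      intro h H M hc hH
      have hM : M + 1 ∉ H := fun hh => by have := hH _ hh; omega
      have hc' : (insert (M + 1) H).card = h + 1 := by
        rw [Finset.card_insert_of_notMem hM, hc]
      have hH' : ∀ x ∈ insert (M + 1) H, x ≤ M + 1 := by grind
      rw [B_split S H M r hH, Set.encard_union_eq (A_disj _ _ _ _ _ le_rfl _),
        (inj _).encard_image, ihr h H (M + 1) hc (by grind),
        ← step h r _ (M + 1) hc' hH' (fun H' h1 h2 => ihr h H' _ h1 h2)]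
      exact ihr (h + 1) _ _ hc' hH'
    intro h
    induction h with
    | zero =>
      intro H M hc hH
      have : AS S H M (r + 1) = BS S H M (r + 1) := by
        ext p
        constructor
        · rintro ⟨h1, h2, h3⟩
          rw [Finset.card_eq_zero] at hc
          subst hc
          refine ⟨⟨h1, h2, h3⟩, ?_⟩
          rcases p with _ | ⟨x, p⟩
          · have := h2 (M + 1)
            grind
          · have := h2 x
            exact ⟨x, p, rfl, by grind⟩
        · exact fun h => h.1
      rw [this, hB 0 H M hc hH, gB]
    | succ h ih =>
      intro H M hc hH
      rw [step h (r + 1) H M hc hH (fun H' h1 h2 => ih H' M h1 h2), hB (h + 1) H M hc hH, gB]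
      push_cast
      rfl

/-- permutations of `{1,…,n}` avoiding the ternary relation `T` on subsequences of length 3 -/
def AvT (n : ℕ) (T : ℕ → ℕ → ℕ → Prop) : Set (List ℕ) :=
  {p | p.Nodup ∧ (∀ x, x ∈ p ↔ 1 ≤ x ∧ x ≤ n) ∧ ∀ x y z, [x, y, z].Sublist p → ¬ T x y z}

theorem nodup3 {p : List ℕ} (hp : p.Nodup) {x y z : ℕ} (h : [x, y, z].Sublist p) :
    x ≠ y ∧ x ≠ z ∧ y ≠ z := by
  have := hp.sublist h
  simp at this
  tauto

theorem AvT_of_S (n : ℕ) (S : ℕ → ℕ → Prop) (T : ℕ → ℕ → ℕ → Prop)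
    (hS : ∀ a b, S a b → ¬ S b a)
    (hmin : ∀ H : Finset ℕ, H.Nonempty → ∃ s ∈ H, ∀ y ∈ H, y ≠ s → S s y)
    (hT : ∀ x y z, x ≠ y → x ≠ z → y ≠ z → (¬ T x y z ↔ (y ≤ x → z ≤ x → S y z))) :
    (AvT n T).encard = (catalan n : ℕ∞) := by
  rw [← gB_catalan, ← AS_encard S hS hmin n 0 ∅ 0 rfl (by simp)]
  congr 1
  ext p
  constructor
  · rintro ⟨h1, h2, h3⟩
    refine ⟨h1, fun x => ?_, ?_, ?_⟩
    · rw [h2]; simp; omega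
    · rw [List.pairwise_iff_forall_sublist]
      intro a b hs ha
      have := (h2 a).1 (hs.subset (by simp))
      omega
    · rw [goodL_iff]
      intro c a b hs
      obtain ⟨e1, e2, e3⟩ := nodup3 h1 hs
      exact (hT c a b e1 e2 e3).1 (h3 c a b hs)
  · rintro ⟨h1, h2, h4, h3⟩
    refine ⟨h1, fun x => ?_, ?_⟩
    · rw [h2]; simp; omega
    · rw [goodL_iff] at h3
      intro c a b hs
      obtain ⟨e1, e2, e3⟩ := nodup3 h1 hs
      exact (hT c a b e1 e2 e3).2 (h3 c a b hs)

theorem AvT_321 (n : ℕ) : (AvT n (fun x y z => z < y ∧ y < x)).encard = (catalan n : ℕ∞) := by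
  apply AvT_of_S n (fun a b => a < b)
  · intro a b; omega
  · intro H hH
    exact ⟨H.min' hH, H.min'_mem hH, fun y hy hne => lt_of_le_of_ne (H.min'_le y hy) hne.symm⟩
  · intro x y z _ _ _; omega

theorem AvT_312 (n : ℕ) : (AvT n (fun x y z => y < z ∧ z < x)).encard = (catalan n : ℕ∞) := by
  apply AvT_of_S n (fun a b => b < a)
  · intro a b; omega
  · intro H hH
    exact ⟨H.max' hH, H.max'_mem hH, fun y hy hne => lt_of_le_of_ne (H.le_max' y hy) hne⟩
  · intro x y z _ _ _; omega

theorem AvT_rev (n : ℕ) (T : ℕ → ℕ → ℕ → Prop) :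
    (AvT n (fun x y z => T z y x)).encard = (AvT n T).encard := by
  rw [← List.reverse_injective.encard_image]
  congr 1
  ext p
  constructor
  · rintro ⟨q, ⟨h1, h2, h3⟩, rfl⟩
    refine ⟨by simpa using h1, by simpa using h2, fun x y z hs => h3 z y x ?_⟩
    simpa using hs.reverse
  · rintro ⟨h1, h2, h3⟩
    refine ⟨p.reverse, ⟨by simpa using h1, by simpa using h2, fun x y z hs => h3 z y x ?_⟩, by simp⟩
    simpa using hs.reverse

theorem AvT_compl_le (n : ℕ) (T T' : ℕ → ℕ → ℕ → Prop)
    (hT : ∀ x y z, x ≤ n → y ≤ n → z ≤ n → T' x y z → T (n + 1 - x) (n + 1 - y) (n + 1 - z)) :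
    (AvT n T).encard ≤ (AvT n T').encard := by
  have inv : ∀ p : List ℕ, (∀ x, x ∈ p ↔ 1 ≤ x ∧ x ≤ n) →
      (p.map (fun x => n + 1 - x)).map (fun x => n + 1 - x) = p := by
    intro p hp
    rw [List.map_map]
    conv_rhs => rw [← List.map_id p]
    apply List.map_congr_left
    intro x hx
    have := (hp x).1 hx
    simp; omega
  apply Set.encard_le_encard_of_injOn (f := fun p : List ℕ => p.map (fun x => n + 1 - x))
  · rintro p ⟨h1, h2, h3⟩
    have hm : ∀ x, x ∈ p.map (fun x => n + 1 - x) ↔ 1 ≤ x ∧ x ≤ n := by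
      intro x
      rw [List.mem_map]
      constructor
      · rintro ⟨y, hy, rfl⟩
        have := (h2 y).1 hy
        omega
      · intro hx
        exact ⟨n + 1 - x, (h2 _).2 (by omega), by omega⟩
    refine ⟨?_, hm, ?_⟩
    · apply List.Nodup.map_on _ h1
      intro x hx y hy
      have := (h2 x).1 hx
      have := (h2 y).1 hy
      omega
    · intro x y z hs ht
      have hx := (hm x).1 (hs.subset (by simp))
      have hy := (hm y).1 (hs.subset (by simp))
      have hz := (hm z).1 (hs.subset (by simp))
      have h4 := hs.map (fun x => n + 1 - x)
      rw [inv p h2] at h4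
      exact h3 _ _ _ h4 (hT x y z hx.2 hy.2 hz.2 ht)
  · intro p hp q hq h
    have h' : p.map (fun x => n + 1 - x) = q.map (fun x => n + 1 - x) := h
    rw [← inv p hp.2.1, ← inv q hq.2.1, h']

theorem AvT_132 (n : ℕ) : (AvT n (fun x y z => x < z ∧ z < y)).encard = (catalan n : ℕ∞) := by
  rw [← AvT_312]
  apply le_antisymm <;> apply AvT_compl_le <;> intro x y z _ _ _ _ <;> omega

/-- `x y z` is order-isomorphic to `i j k` -/
def Iso3 (i j k x y z : ℕ) : Prop :=
  (x < y ↔ i < j) ∧ (y < x ↔ j < i) ∧ (x < z ↔ i < k) ∧ (z < x ↔ k < i) ∧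
  (y < z ↔ j < k) ∧ (z < y ↔ k < j)

theorem AvT_congr (n : ℕ) (T T' : ℕ → ℕ → ℕ → Prop)
    (h : ∀ x y z, x ≠ y → x ≠ z → y ≠ z → (T x y z ↔ T' x y z)) : AvT n T = AvT n T' := by
  ext p
  constructor
  · rintro ⟨h1, h2, h3⟩
    refine ⟨h1, h2, fun x y z hs ht => ?_⟩
    obtain ⟨e1, e2, e3⟩ := nodup3 h1 hs
    exact h3 x y z hs ((h x y z e1 e2 e3).2 ht)
  · rintro ⟨h1, h2, h3⟩
    refine ⟨h1, h2, fun x y z hs ht => ?_⟩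
    obtain ⟨e1, e2, e3⟩ := nodup3 h1 hs
    exact h3 x y z hs ((h x y z e1 e2 e3).1 ht)

theorem perm_cases {i j k : ℕ} (h : [i, j, k].Perm [1, 2, 3]) :
    (i = 1 ∧ j = 2 ∧ k = 3) ∨ (i = 1 ∧ j = 3 ∧ k = 2) ∨ (i = 2 ∧ j = 1 ∧ k = 3) ∨
    (i = 2 ∧ j = 3 ∧ k = 1) ∨ (i = 3 ∧ j = 1 ∧ k = 2) ∨ (i = 3 ∧ j = 2 ∧ k = 1) := by
  have hn : [i, j, k].Nodup := h.nodup_iff.2 (by decide)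
  have hi : i ∈ [1, 2, 3] := h.subset (by simp)
  have hj : j ∈ [1, 2, 3] := h.subset (by simp)
  have hk : k ∈ [1, 2, 3] := h.subset (by simp)
  simp at hn hi hj hk
  rcases hi with rfl | rfl | rfl <;> rcases hj with rfl | rfl | rfl <;>
    rcases hk with rfl | rfl | rfl <;> simp at hn ⊢

theorem AvT_Iso3 (n i j k : ℕ) (h : [i, j, k].Perm [1, 2, 3]) :
    (AvT n (Iso3 i j k)).encard = (catalan n : ℕ∞) := by
  rcases perm_cases h with ⟨rfl, rfl, rfl⟩ | ⟨rfl, rfl, rfl⟩ | ⟨rfl, rfl, rfl⟩ |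
    ⟨rfl, rfl, rfl⟩ | ⟨rfl, rfl, rfl⟩ | ⟨rfl, rfl, rfl⟩
  · rw [← AvT_321, ← AvT_rev n (fun x y z => z < y ∧ y < x)]
    congr 1; apply AvT_congr; intro x y z _ _ _; simp [Iso3]; omega
  · rw [← AvT_132]
    congr 1; apply AvT_congr; intro x y z _ _ _; simp [Iso3]; omega
  · rw [← AvT_312, ← AvT_rev n (fun x y z => y < z ∧ z < x)]
    congr 1; apply AvT_congr; intro x y z _ _ _; simp [Iso3]; omega
  · rw [← AvT_132, ← AvT_rev n (fun x y z => x < z ∧ z < y)]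
    congr 1; apply AvT_congr; intro x y z _ _ _; simp [Iso3]; omega
  · rw [← AvT_312]
    congr 1; apply AvT_congr; intro x y z _ _ _; simp [Iso3]; omega
  · rw [← AvT_321]
    congr 1; apply AvT_congr; intro x y z _ _ _; simp [Iso3]; omega

theorem contains4 (w : List ℕ) (a b c e : ℕ) : Contains w [a, b, c, e] ↔
    ∃ x y z t, [x, y, z, t].Sublist w ∧ OrderIsoWord [x, y, z, t] [a, b, c, e] := by
  constructor
  · rintro ⟨l, hl, ho⟩
    obtain ⟨x, y, z, t, rfl⟩ : ∃ x y z t, l = [x, y, z, t] := by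
      have := ho.1
      rcases l with _ | ⟨x, _ | ⟨y, _ | ⟨z, _ | ⟨t, _ | ⟨_, _⟩⟩⟩⟩⟩ <;> simp at this
      exact ⟨x, y, z, t, rfl⟩
    exact ⟨x, y, z, t, hl, ho⟩
  · rintro ⟨x, y, z, t, hl, ho⟩
    exact ⟨_, hl, ho⟩

theorem orderIso4 (a b c e x y z t : ℕ) : OrderIsoWord [x, y, z, t] [a, b, c, e] ↔
    (x < y ↔ a < b) ∧ (y < x ↔ b < a) ∧ (x < z ↔ a < c) ∧ (z < x ↔ c < a) ∧
    (x < t ↔ a < e) ∧ (t < x ↔ e < a) ∧ (y < z ↔ b < c) ∧ (z < y ↔ c < b) ∧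
    (y < t ↔ b < e) ∧ (t < y ↔ e < b) ∧ (z < t ↔ c < e) ∧ (t < z ↔ e < c) := by
  constructor
  · rintro ⟨_, h⟩
    exact ⟨(h 0 1 (by simp) (by simp)).1, (h 1 0 (by simp) (by simp)).1,
      (h 0 2 (by simp) (by simp)).1, (h 2 0 (by simp) (by simp)).1,
      (h 0 3 (by simp) (by simp)).1, (h 3 0 (by simp) (by simp)).1,
      (h 1 2 (by simp) (by simp)).1, (h 2 1 (by simp) (by simp)).1,
      (h 1 3 (by simp) (by simp)).1, (h 3 1 (by simp) (by simp)).1,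
      (h 2 3 (by simp) (by simp)).1, (h 3 2 (by simp) (by simp)).1⟩
  · intro h
    refine ⟨rfl, ?_⟩
    intro r s hr hs
    simp only [List.length_cons, List.length_nil] at hr hs
    have hr' : r = 0 ∨ r = 1 ∨ r = 2 ∨ r = 3 := by omega
    have hs' : s = 0 ∨ s = 1 ∨ s = 2 ∨ s = 3 := by omega
    rcases hr' with rfl | rfl | rfl | rfl <;> rcases hs' with rfl | rfl | rfl | rfl <;>
      simp only [List.getD_cons_zero, List.getD_cons_succ] <;> first | (simp; done) | omega

theorem contains_ijjk (w : List ℕ) (i j k : ℕ) : Contains w [i, j, j, k] ↔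
    ∃ x y z, [x, y, y, z].Sublist w ∧ Iso3 i j k x y z := by
  rw [contains4]
  constructor
  · rintro ⟨x, y, z, t, hs, h⟩
    rw [orderIso4] at h
    have : y = z := by omega
    subst this
    exact ⟨x, y, t, hs, by unfold Iso3; omega⟩
  · rintro ⟨x, y, z, hs, h⟩
    refine ⟨x, y, y, z, hs, ?_⟩
    rw [orderIso4]
    unfold Iso3 at h
    omega

theorem nonnest_iff (w : List ℕ) : (Avoids w [1, 2, 2, 1] ∧ Avoids w [2, 1, 1, 2]) ↔
    ∀ x y, x ≠ y → ¬ [x, y, y, x].Sublist w := by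
  unfold Avoids
  rw [contains_ijjk, contains_ijjk]
  constructor
  · rintro ⟨h1, h2⟩ x y hxy hs
    rcases Nat.lt_or_gt_of_ne hxy with h | h
    · exact h1 ⟨x, y, x, hs, by unfold Iso3; omega⟩
    · exact h2 ⟨x, y, x, hs, by unfold Iso3; omega⟩
  · intro h
    constructor
    · rintro ⟨x, y, z, hs, hi⟩
      unfold Iso3 at hi
      obtain rfl : x = z := by omega
      exact h x y (by omega) hs
    · rintro ⟨x, y, z, hs, hi⟩
      unfold Iso3 at hi
      obtain rfl : x = z := by omega
      exact h x y (by omega) hs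

theorem length_of_mem (n : ℕ) (p : List ℕ) (hp : p.Nodup) (h : ∀ x, x ∈ p ↔ 1 ≤ x ∧ x ≤ n) :
    p.length = n := by
  have : p.toFinset = Finset.Icc 1 n := by
    ext x; simp [h]
  rw [← List.toFinset_card_of_nodup hp, this]
  simp

theorem avoid_eq_image (n i j k : ℕ) (hijk : [i, j, k].Perm [1, 2, 3]) :
    {w : List ℕ | IsNonnesting n w ∧ Avoids w [i, j, j, k]} =
      (fun q : List Bool × List ℕ => weave q.1 [] q.2) ''
        ({d | isP 0 n d} ×ˢ AvT n (Iso3 i j k)) := by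
  have hne : ∀ x y z, Iso3 i j k x y z → x ≠ y ∧ y ≠ z := by
    intro x y z h
    unfold Iso3 at h
    have := perm_cases hijk
    omega
  ext w
  constructor
  · rintro ⟨⟨h1, h2⟩, h3⟩
    rw [nonnest_iff] at h2
    obtain ⟨d, p, e1, e2, e3, e4⟩ := weave_surj w [] (by simp)
      (by intro x; simp only [List.nil_append]; rw [h1 x]; split_ifs <;> simp)
      (by simpa using h2)
    simp only [List.nil_append, List.length_nil] at e1 e2 e4
    have hm : ∀ x, x ∈ p ↔ 1 ≤ x ∧ x ≤ n := by
      intro x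
      rw [e4, ← List.count_pos_iff, h1 x]
      split_ifs with h <;> simp [h]
    have hl := length_of_mem n p e2 hm
    refine ⟨(d, p), ⟨?_, e2, hm, ?_⟩, e3⟩
    · rw [hl] at e1; exact e1
    · intro x y z hs hi
      apply h3
      rw [contains_ijjk]
      refine ⟨x, y, z, ?_, hi⟩
      rw [← e3, weave_pattern d p e1 e2 x y z (hne x y z hi).1 (hne x y z hi).2]
      exact hs
  · rintro ⟨⟨d, p⟩, ⟨hd, hp, hm, ha⟩, rfl⟩
    have hl := length_of_mem n p hp hm
    have hd' : isP 0 p.length d := by rw [hl]; exact hd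
    refine ⟨⟨?_, ?_⟩, ?_⟩
    · intro x
      have := weave_count d [] p hd' hp x
      simp only [List.nil_append, hm] at this
      exact this
    · rw [nonnest_iff]
      exact weave_nonnest d p hd' hp
    · intro hc
      rw [contains_ijjk] at hc
      obtain ⟨x, y, z, hs, hi⟩ := hc
      exact ha x y z ((weave_pattern d p hd' hp x y z (hne x y z hi).1 (hne x y z hi).2).1 hs) hi

theorem nonnesting_avoid_ijjk (n : ℕ) (hn : 1 ≤ n) (i j k : ℕ)
    (hijk : [i, j, k].Perm [1, 2, 3]) :
    {w : List ℕ | IsNonnesting n w ∧ Avoids w [i, j, j, k]}.ncard =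
      (catalan n) ^ 2 := by
  rw [avoid_eq_image n i j k hijk, Set.ncard, Set.InjOn.encard_image, Set.encard_prod,
    isP_encard, AvT_Iso3 n i j k hijk, gB_catalan, ← Nat.cast_mul, ENat.toNat_natCast, sq]
  rintro ⟨d, p⟩ ⟨hd, hp⟩ ⟨d', p'⟩ ⟨hd', hp'⟩ h
  have hl := length_of_mem n p hp.1 hp.2.1
  have hl' := length_of_mem n p' hp'.1 hp'.2.1
  have := weave_inj d d' [] p p' (by rw [hl]; exact hd) (by rw [hl']; exact hd') hp.1 hp'.1 h
  rw [this.1, this.2]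
end

section
/- For all n ≥ 1, the number of nonnesting permutations of the multiset {1,1,2,2,…,n,n} that avoid all three patterns 1123, 1322, and 2331 equals C_{n+1} − 1, where C_{n+1} is the (n+1)st Catalan number. -/
open DyckStep

namespace NN

/-- Reading a path `d` from a state (queue `q`, unopened `r`), writing `w`. -/
inductive Run (Q R : List ℕ) : List ℕ → List ℕ → List DyckStep → List ℕ → Prop
  | nil : Run Q R Q R [] []
  | up {q x r d w} : Run Q R (q ++ [x]) r d w → Run Q R q (x :: r) (U :: d) (x :: w)
  | dn {q x r d w} : Run Q R q r d w → Run Q R (x :: q) r (D :: d) (x :: w)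

/-- Height after reading a path. -/
def hgt : ℕ → List DyckStep → Option ℕ
  | h, [] => some h
  | h, U :: d => hgt (h + 1) d
  | 0, D :: _ => none
  | h + 1, D :: d => hgt h d

theorem hgt_append (h p r) : hgt h (p ++ r) = (hgt h p).bind fun h' => hgt h' r := by
  induction p generalizing h with
  | nil => simp [hgt]
  | cons s p ih =>
    cases s
    · simp [hgt, ih]
    · cases h <;> simp [hgt, ih]

theorem hgt_count {h p h'} (H : hgt h p = some h') : h + p.count U = h' + p.count D := by
  induction p generalizing h with
  | nil => simp [hgt] at H; simp [H]
  | cons s p ih =>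
    cases s
    · have := ih (h := h + 1) (by simpa [hgt] using H)
      simp; omega
    · cases h with
      | zero => simp [hgt] at H
      | succ h =>
        have := ih (h := h) (by simpa [hgt] using H)
        simp; omega

theorem hgt_repU (h j) : hgt h (List.replicate j U) = some (h + j) := by
  induction j generalizing h with
  | zero => simp [hgt]
  | succ j ih => simp [List.replicate_succ, hgt, ih]; omega

theorem hgt_repD (h) : hgt h (List.replicate h D) = some 0 := by
  induction h with
  | zero => simp [hgt]
  | succ j ih => simp [List.replicate_succ, hgt, ih]

theorem hgt_iff (h d) : hgt h d = some 0 ↔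
    (∀ i, (d.take i).count D ≤ h + (d.take i).count U) ∧ d.count D = h + d.count U := by
  induction d generalizing h with
  | nil => simp [hgt]; omega
  | cons s d ih =>
    cases s
    · simp only [hgt, ih, List.count_cons]
      constructor
      · rintro ⟨h1, h2⟩
        refine ⟨fun i => ?_, by simp; omega⟩
        cases i with
        | zero => simp
        | succ i => have := h1 i; simp; omega
      · rintro ⟨h1, h2⟩
        refine ⟨fun i => ?_, by simp at h2; omega⟩
        have := h1 (i+1); simp at this; omega
    · cases h with
      | zero =>
        simp only [hgt]
        constructor
        · simp
        · rintro ⟨h1, -⟩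
          have := h1 1; simp at this
      | succ h =>
        simp only [hgt, ih, List.count_cons]
        constructor
        · rintro ⟨h1, h2⟩
          refine ⟨fun i => ?_, by simp; omega⟩
          cases i with
          | zero => simp
          | succ i => have := h1 i; simp; omega
        · rintro ⟨h1, h2⟩
          refine ⟨fun i => ?_, by simp at h2; omega⟩
          have := h1 (i+1); simp at this; omega

/-- Dyck paths of semilength `n`. -/
def DP (n : ℕ) : Set (List DyckStep) := {d | hgt 0 d = some 0 ∧ d.count U = n}

theorem DP_eq (n : ℕ) : DP n =
    (fun p : {p : DyckWord // p.semilength = n} => p.1.toList) '' Set.univ := by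
  ext d
  simp only [DP, hgt_iff, Set.mem_ofPred_eq, Set.image_univ, Set.mem_range, Subtype.exists]
  constructor
  · rintro ⟨⟨h1, h2⟩, h3⟩
    exact ⟨⟨d, by omega, fun i => by have := h1 i; omega⟩, h3, rfl⟩
  · rintro ⟨p, hp, rfl⟩
    exact ⟨⟨fun i => by have := p.count_D_le_count_U i; omega, by have := p.count_U_eq_count_D; omega⟩, hp⟩

theorem DP_finite (n : ℕ) : (DP n).Finite := by
  rw [DP_eq]; exact Set.Finite.image _ Set.finite_univ

theorem DP_ncard (n : ℕ) : (DP n).ncard = catalan n := by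
  rw [DP_eq, Set.ncard_image_of_injective, Set.ncard_univ, Nat.card_eq_fintype_card,
    DyckWord.card_dyckWord_semilength_eq_catalan]
  intro p q h
  exact Subtype.ext (DyckWord.ext h)

theorem split_unique {p p' r r' : List DyckStep} (h : p ++ U :: r = p' ++ U :: r')
    (hc : p.count U = p'.count U) : p = p' ∧ r = r' := by
  induction p generalizing p' with
  | nil =>
    cases p' with
    | nil => simpa using h
    | cons s p' => simp at h; obtain ⟨rfl, h⟩ := h; simp at hc
  | cons s p ih =>
    cases p' with
    | nil => simp at h; obtain ⟨rfl, h⟩ := h; simp at hc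
    | cons s' p' =>
      simp only [List.cons_append, List.cons.injEq] at h
      obtain ⟨rfl, h⟩ := h
      have := ih h (by simp only [List.count_cons] at hc; omega)
      simp [this]

theorem split_exists {d : List DyckStep} {m : ℕ} (h : m < d.count U) :
    ∃ p r, d = p ++ U :: r ∧ p.count U = m := by
  induction d generalizing m with
  | nil => simp at h
  | cons s d ih =>
    cases s
    · cases m with
      | zero => exact ⟨[], d, by simp⟩
      | succ m =>
        obtain ⟨p, r, h1, h2⟩ := ih (m := m) (by simpa using h)
        exact ⟨U :: p, r, by simp [h1], by simp [h2]⟩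
    · obtain ⟨p, r, h1, h2⟩ := ih (m := m) (by simpa using h)
      exact ⟨D :: p, r, by simp [h1], by simp [h2]⟩

/-- Path prefixes with `m` up steps and positive final height. -/
def A (m : ℕ) : Set (List DyckStep) := {p | p.count U = m ∧ ∃ j, hgt 0 p = some (j + 1)}

/-- Completion of a prefix. -/
def comp (n m : ℕ) (p : List DyckStep) : List DyckStep :=
  p ++ (List.replicate (n - m) U ++ List.replicate (n - p.count D) D)

def E1 (n m : ℕ) : Set (List DyckStep) := (fun x => x.1 ++ x.2) '' (DP m ×ˢ DP (n - m))
def E2 (n m : ℕ) : Set (List DyckStep) := comp n m '' A m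
def E (n m : ℕ) : Set (List DyckStep) := E1 n m ∪ E2 n m

theorem DP_cons {n d} (h : d ∈ DP n) (hn : 0 < n) : ∃ r, d = U :: r := by
  obtain ⟨h1, h2⟩ := h
  cases d with
  | nil => simp at h2; omega
  | cons s d =>
    cases s
    · exact ⟨d, rfl⟩
    · simp [hgt] at h1

theorem comp_eq {n m p} (h : m < n) : ∃ r, comp n m p = p ++ U :: r := by
  obtain ⟨j, hj⟩ : ∃ j, n - m = j + 1 := ⟨n - m - 1, by omega⟩
  exact ⟨_, by rw [comp, hj, List.replicate_succ]; rfl⟩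

theorem E1_sub {n m} (h : m < n) : E1 n m ⊆ DP n := by
  rintro _ ⟨⟨p, r⟩, ⟨⟨h1, h2⟩, h3, h4⟩, rfl⟩
  simp only at h1 h2 h3 h4
  refine ⟨by simp [hgt_append, h1, h3], by simp [h2, h4]; omega⟩

theorem E2_sub {n m} (h : m < n) : E2 n m ⊆ DP n := by
  rintro _ ⟨p, ⟨h2, j, h1⟩, rfl⟩
  have := hgt_count h1
  refine ⟨?_, ?_⟩
  · have e : n - p.count D = j + 1 + (n - m) := by omega
    simp [comp, hgt_append, h1, hgt_repU, e, hgt_repD]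
  · simp [comp, h2, List.count_replicate]; omega

theorem E_sub {n m} (h : m < n) : E n m ⊆ DP n := Set.union_subset (E1_sub h) (E2_sub h)

theorem E1_ncard {n m} (h : m < n) : (E1 n m).ncard = catalan m * catalan (n - m) := by
  rw [E1, Set.InjOn.ncard_image, Set.ncard_prod, DP_ncard, DP_ncard]
  rintro ⟨p, r⟩ ⟨hp, hr⟩ ⟨p', r'⟩ ⟨hp', hr'⟩ e
  obtain ⟨s, rfl⟩ := DP_cons hr (by omega)
  obtain ⟨s', rfl⟩ := DP_cons hr' (by omega)
  have := split_unique e (by rw [hp.2, hp'.2])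
  exact Prod.ext this.1 (by simp [this.2])

theorem E2_ncard {n m} (h : m < n) : (E2 n m).ncard = (A m).ncard := by
  rw [E2, Set.InjOn.ncard_image]
  intro p hp p' hp' e
  obtain ⟨s, hs⟩ := comp_eq (p := p) h
  obtain ⟨s', hs'⟩ := comp_eq (p := p') h
  rw [hs, hs'] at e
  exact (split_unique e (by rw [hp.1, hp'.1])).1

theorem E_ncard {n m} (h : m < n) :
    (E n m).ncard = catalan m * catalan (n - m) + (A m).ncard := by
  rw [E, Set.ncard_union_eq _ ((DP_finite n).subset (E1_sub h)) ((DP_finite n).subset (E2_sub h)),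
    E1_ncard h, E2_ncard h]
  rw [Set.disjoint_left]
  rintro _ ⟨⟨p, r⟩, ⟨hp, hr⟩, rfl⟩ ⟨p', hp', e⟩
  obtain ⟨s, rfl⟩ := DP_cons hr (by omega)
  obtain ⟨s', hs'⟩ := comp_eq (p := p') h
  rw [hs'] at e
  have e := (split_unique e (by rw [hp.2, hp'.1])).1
  subst e
  obtain ⟨j, hj⟩ := hp'.2
  have := hp.1
  simp [hj] at this

theorem hgt_noU {h d} (H : hgt h d = some 0) (hc : d.count U = 0) :
    d = List.replicate h D := by
  have := hgt_count H
  rw [List.eq_replicate_iff]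
  constructor
  · have : d.length = d.count U + d.count D := by
      clear * -
      induction d with
      | nil => simp
      | cons s d ih => cases s <;> simp [ih] <;> omega
    omega
  · intro b hb
    cases b
    · exact absurd hb (List.count_eq_zero.1 hc)
    · rfl

theorem hgt_split {p r : List DyckStep} {h h'} (H : hgt h (p ++ r) = some h') :
    ∃ k, hgt h p = some k ∧ hgt k r = some h' := by
  rw [hgt_append] at H
  cases e : hgt h p with
  | none => simp [e] at H
  | some k => exact ⟨k, rfl, by simpa [e] using H⟩

theorem E_top (m) : E (m + 1) m = DP (m + 1) := by
  refine Set.Subset.antisymm (E_sub (by omega)) ?_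
  rintro d ⟨h1, h2⟩
  obtain ⟨p, r, rfl, hp⟩ := split_exists (m := m) (by omega : m < d.count U)
  obtain ⟨k, hk, hr⟩ := hgt_split h1
  cases k with
  | zero =>
    left
    refine ⟨(p, U :: r), ⟨⟨hk, hp⟩, hr, ?_⟩, rfl⟩
    simp at h2 ⊢; omega
  | succ k =>
    right
    refine ⟨p, ⟨hp, k, hk⟩, ?_⟩
    have := hgt_noU (by simpa [hgt] using hr : hgt _ r = _) (by simp at h2; omega)
    have h3 := hgt_count hk
    rw [comp, this]
    simp
    omega

theorem A_ncard (m) : (A m).ncard + catalan m = catalan (m + 1) := by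
  have := E_ncard (n := m + 1) (m := m) (by omega)
  rw [E_top, DP_ncard] at this
  simp at this
  omega

theorem total (n : ℕ) :
    ∑ m ∈ Finset.range n, (E n m).ncard + 1 = catalan (n + 1) := by
  have h1 : ∑ m ∈ Finset.range n, (E n m).ncard
      = ∑ m ∈ Finset.range n, catalan m * catalan (n - m) + ∑ m ∈ Finset.range n, (A m).ncard := by
    rw [← Finset.sum_add_distrib]
    exact Finset.sum_congr rfl fun m hm => E_ncard (Finset.mem_range.1 hm)
  have h2 : ∀ n, ∑ m ∈ Finset.range n, (A m).ncard + 1 = catalan n := by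
    intro n
    induction n with
    | zero => simp
    | succ n ih => rw [Finset.sum_range_succ]; have := A_ncard n; omega
  have h3 := catalan_succ' n
  rw [Finset.Nat.sum_antidiagonal_eq_sum_range_succ (fun a b => catalan a * catalan b),
    Finset.sum_range_succ] at h3
  have := h2 n
  simp at h3
  omega

abbrev Fill := Run [] []

theorem Run.append {Q R Q' R' q r p w d w'} (h : Run Q' R' q r p w) (h' : Run Q R Q' R' d w') :
    Run Q R q r (p ++ d) (w ++ w') := by
  induction h with
  | nil => exact h'
  | up _ ih => exact .up ih
  | dn _ ih => exact .dn ih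

theorem Run.split {Q R q r p d w} (h : Run Q R q r (p ++ d) w) :
    ∃ Q' R' w1 w2, w = w1 ++ w2 ∧ Run Q' R' q r p w1 ∧ Run Q R Q' R' d w2 := by
  induction p generalizing q r w with
  | nil => exact ⟨q, r, [], w, rfl, .nil, h⟩
  | cons s p ih =>
    rw [List.cons_append] at h
    cases h with
    | up h =>
      obtain ⟨Q', R', w1, w2, rfl, h1, h2⟩ := ih h
      exact ⟨Q', R', _, w2, rfl, .up h1, h2⟩
    | dn h =>
      obtain ⟨Q', R', w1, w2, rfl, h1, h2⟩ := ih h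
      exact ⟨Q', R', _, w2, rfl, .dn h1, h2⟩

theorem Run.state {Q R q r d w} (h : Run Q R q r d w) :
    ∃ s t, q ++ r = s ++ (Q ++ R) ∧ r = t ++ R ∧ s.length = d.count D ∧ t.length = d.count U ∧
      (∀ x ∈ w, x ∈ s ∨ x ∈ t) ∧ ∀ x, w.count x = s.count x + t.count x := by
  induction h with
  | nil => exact ⟨[], [], by simp⟩
  | @up q x r d w _ ih =>
    obtain ⟨s, t, h1, h2, h3, h4, h5, h6⟩ := ih
    refine ⟨s, x :: t, by simpa using h1, by simp [h2], by simp [h3], by simp [h4], ?_, ?_⟩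
    · intro y hy
      rcases List.mem_cons.1 hy with rfl | hy
      · simp
      · rcases h5 y hy with h | h <;> simp [h]
    · intro y; simp only [List.count_cons, h6]; omega
  | @dn q x r d w _ ih =>
    obtain ⟨s, t, h1, h2, h3, h4, h5, h6⟩ := ih
    refine ⟨x :: s, t, by simpa using h1, by simp [h2], by simp [h3], by simp [h4], ?_, ?_⟩
    · intro y hy
      rcases List.mem_cons.1 hy with rfl | hy
      · simp
      · rcases h5 y hy with h | h <;> simp [h]
    · intro y; simp only [List.count_cons, h6]; omega

theorem Run.height {Q R q r d w} (h : Run Q R q r d w) : hgt q.length d = some Q.length := by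
  induction h with
  | nil => rfl
  | up _ ih => simpa [NN.hgt] using ih
  | dn _ ih => simpa [NN.hgt] using ih

theorem Run.count {q r d w} (h : Fill q r d w) (x : ℕ) :
    w.count x = q.count x + 2 * r.count x := by
  obtain ⟨s, t, h1, h2, -, -, -, h6⟩ := h.state
  simp at h1 h2
  subst h1 h2
  rw [h6, List.count_append]; omega

theorem Run.countU {q r d w} (h : Fill q r d w) : d.count U = r.length := by
  obtain ⟨s, t, h1, h2, h3, h4, -, h6⟩ := h.state
  simp at h2; subst h2; exact h4.symm

theorem Run.exists {q r d} (h : hgt q.length d = some 0) (hc : d.count U = r.length) :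
    ∃ w, Fill q r d w := by
  induction d generalizing q r with
  | nil =>
    simp [hgt] at h hc
    subst h; rw [List.length_eq_zero_iff.1 hc.symm]
    exact ⟨[], .nil⟩
  | cons s d ih =>
    cases s
    · cases r with
      | nil => simp at hc
      | cons x r =>
        obtain ⟨w, hw⟩ := ih (q := q ++ [x]) (r := r) (by simpa [hgt] using h) (by simpa using hc)
        exact ⟨_, .up hw⟩
    · cases q with
      | nil => simp [hgt] at h
      | cons x q =>
        obtain ⟨w, hw⟩ := ih (q := q) (r := r) (by simpa [hgt] using h) (by simpa using hc)
        exact ⟨_, .dn hw⟩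

theorem Run.inj {q r r' d d' w} (h : Fill q r d w) (h' : Fill q r' d' w)
    (hn : (q ++ r).Nodup) (hn' : (q ++ r').Nodup) : r = r' ∧ d = d' := by
  induction h generalizing r' d' with
  | nil => cases h'; exact ⟨rfl, rfl⟩
  | @up q x r d w _ ih =>
    cases h' with
    | up h' =>
      have := ih h' (by simpa using hn) (by simpa using hn')
      simp [this]
    | dn h' => exact absurd hn (by simp)
  | @dn q x r d w _ ih =>
    cases h' with
    | up h' => exact absurd hn' (by simp)
    | dn h' =>
      have := ih h' (by simp at hn; simpa using hn.2) (by simp at hn'; simpa using hn'.2)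
      simp [this]

theorem Run.inj_w {q r d w w'} (h : Fill q r d w) (h' : Fill q r d w') : w = w' := by
  induction h generalizing w' with
  | nil => cases h'; rfl
  | up _ ih => cases h' with | up h' => rw [ih h']
  | dn _ ih => cases h' with | dn h' => rw [ih h']

theorem Run.sub {q r d w} (h : Fill q r d w) : (q ++ r).Sublist w := by
  induction h with
  | nil => simp
  | up _ ih => exact .cons _ (by simpa using ih)
  | dn _ ih => exact .cons_cons _ (by simpa using ih)

/-- `x t` in `r` gives `x x t`. -/
theorem Run.dbl_first {q r d w x t} (h : Fill q r d w) (ht : (x :: t).Sublist r) :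
    (x :: x :: t).Sublist w := by
  induction h with
  | nil => simp at ht
  | @up q z r d w h ih =>
    cases ht with
    | cons _ ht => exact .cons _ (ih ht)
    | cons_cons _ ht =>
      refine .cons_cons _ (List.Sublist.trans ?_ h.sub)
      rw [List.append_assoc]
      exact (List.Sublist.cons_cons _ ht).trans (List.sublist_append_right _ _)
  | dn _ ih => exact .cons _ (ih ht)

theorem Run.dbl_last {q r d w x t} (h : Fill q r d w) (ht : (t ++ [x]).Sublist r) :
    (t ++ [x, x]).Sublist w := by
  induction h generalizing t with
  | nil => simp at ht
  | @up q z r d w h ih =>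
    cases t with
    | nil => exact h.up.dbl_first ht
    | cons y t =>
      cases ht with
      | cons _ ht => exact .cons _ (ih ht)
      | cons_cons _ ht => exact .cons_cons _ (ih ht)
  | dn _ ih => exact .cons _ (ih ht)

theorem Run.dbl_mid {q r d w x y t} (h : Fill q r d w) (ht : (x :: y :: t).Sublist r) :
    (x :: y :: y :: t).Sublist w := by
  induction h with
  | nil => simp at ht
  | @up q z r d w h ih =>
    cases ht with
    | cons _ ht => exact .cons _ (ih ht)
    | cons_cons _ ht => exact .cons_cons _ (h.dbl_first ht)
  | dn _ ih => exact .cons _ (ih ht)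

theorem two_le_count {w : List ℕ} {x} (h : [x, x].Sublist w) : 2 ≤ w.count x := by
  have := h.count_le x; simpa using this

theorem Run.n0 {q r d w x y} (h : Fill q r d w) (hn : (q ++ r).Nodup)
    (hq : [y, x].Sublist q) : ¬ [x, y].Sublist w := by
  induction h with
  | nil => simp at hq
  | @up q z r d w h ih =>
    have hxq : x ∈ q := hq.subset (by simp)
    intro hs
    cases hs with
    | cons _ hs =>
      exact ih (by simpa using hn) (hq.trans (List.sublist_append_left _ _)) hs
    | cons_cons _ hs =>
      rw [List.nodup_append] at hn
      exact hn.2.2 x hxq x (by simp) rfl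
  | @dn q z r d w h ih =>
    simp only [List.cons_append, List.nodup_cons, List.mem_append, not_or] at hn
    intro hs
    cases hq with
    | cons _ hq =>
      cases hs with
      | cons _ hs => exact ih hn.2 hq hs
      | cons_cons _ hs => exact hn.1.1 (hq.subset (by simp))
    | cons_cons _ hq =>
      have hy : y ∈ w := by
        cases hs with
        | cons _ hs => exact hs.subset (by simp)
        | cons_cons _ hs => exact hs.subset (by simp)
      have := h.count y
      rw [List.count_eq_zero.2 hn.1.1, List.count_eq_zero.2 hn.1.2] at this
      exact List.count_eq_zero.1 (by simpa using this) hy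

theorem Run.n1 {q r d w x y} (h : Fill q r d w) (hn : (q ++ r).Nodup)
    (hq : y ∈ q) : ¬ [x, x, y].Sublist w := by
  induction h with
  | nil => simp at hq
  | @up q z r d w h ih =>
    intro hs
    cases hs with
    | cons _ hs => exact ih (by simpa using hn) (by simp [hq]) hs
    | cons_cons _ hs =>
      refine h.n0 (by simpa using hn) ?_ hs
      exact (List.singleton_sublist.2 hq).append (List.Sublist.refl [x])
  | @dn q z r d w h ih =>
    simp only [List.cons_append, List.nodup_cons, List.mem_append, not_or] at hn
    have hz : z ∉ w := by
      have := h.count z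
      rw [List.count_eq_zero.2 hn.1.1, List.count_eq_zero.2 hn.1.2] at this
      exact List.count_eq_zero.1 (by simpa using this)
    intro hs
    cases hs with
    | cons_cons _ hs => exact hz (hs.subset (by simp))
    | cons _ hs =>
      rcases List.mem_cons.1 hq with rfl | hq
      · exact hz (hs.subset (by simp))
      · exact ih hn.2 hq hs

theorem Run.n2 {q r d w x y} (h : Fill q r d w) (hn : (q ++ r).Nodup) :
    ¬ [x, y, y, x].Sublist w := by
  induction h with
  | nil => simp
  | @up q z r d w h ih =>
    intro hs
    cases hs with
    | cons _ hs => exact ih (by simpa using hn) hs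
    | cons_cons _ hs => exact h.n1 (by simpa using hn) (by simp) hs
  | @dn q z r d w h ih =>
    simp only [List.cons_append, List.nodup_cons, List.mem_append, not_or] at hn
    have hz : z ∉ w := by
      have := h.count z
      rw [List.count_eq_zero.2 hn.1.1, List.count_eq_zero.2 hn.1.2] at this
      exact List.count_eq_zero.1 (by simpa using this)
    intro hs
    cases hs with
    | cons_cons _ hs => exact hz (hs.subset (by simp))
    | cons _ hs => exact ih hn.2 hs

theorem Run.n3 {q r d w x y} (h : Fill q r d w) (hn : (q ++ r).Nodup)
    (hr : [y, x].Sublist r) : ¬ [x, x, y].Sublist w := by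
  induction h with
  | nil => simp at hr
  | @up q z r d w h ih =>
    intro hs
    have hn' : z ∉ r := by rw [List.nodup_append] at hn; simp at hn; exact hn.2.1.1
    cases hr with
    | cons _ hr =>
      cases hs with
      | cons _ hs => exact ih (by simpa using hn) hr hs
      | cons_cons _ hs => exact hn' (hr.subset (by simp))
    | cons_cons _ hr =>
      cases hs with
      | cons _ hs => exact h.n1 (by simpa using hn) (by simp) hs
      | cons_cons _ hs => exact hn' (hr.subset (by simp))
  | @dn q z r d w h ih =>
    simp only [List.cons_append, List.nodup_cons, List.mem_append, not_or] at hn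
    intro hs
    cases hs with
    | cons _ hs => exact ih hn.2 hr hs
    | cons_cons _ hs => exact hn.1.2 (hr.subset (by simp))

theorem Run.n4 {q r d w x y} (h : Fill q r d w) (hn : (q ++ r).Nodup)
    (hr : [y, x].Sublist r) : ¬ [x, y, y].Sublist w := by
  induction h with
  | nil => simp at hr
  | @up q z r d w h ih =>
    intro hs
    have hn' : z ∉ r := by rw [List.nodup_append] at hn; simp at hn; exact hn.2.1.1
    cases hr with
    | cons _ hr =>
      cases hs with
      | cons _ hs => exact ih (by simpa using hn) hr hs
      | cons_cons _ hs => exact hn' (hr.subset (by simp))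
    | cons_cons _ hr =>
      cases hs with
      | cons _ hs =>
        have h1 := hs.count_le y
        have h2 := h.up.count y
        have h3 := List.nodup_iff_count_le_one.1 hn y
        simp [List.count_cons] at h1 h2 h3
        omega
      | cons_cons _ hs => exact hn' (hr.subset (by simp))
  | @dn q z r d w h ih =>
    simp only [List.cons_append, List.nodup_cons, List.mem_append, not_or] at hn
    intro hs
    cases hs with
    | cons _ hs => exact ih hn.2 hr hs
    | cons_cons _ hs => exact hn.1.2 (hr.subset (by simp))

/-- Decoding a nonnesting word. -/
theorem decode (w q : List ℕ) (hq : q.Sublist w)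
    (h1 : ∀ x ∈ q, w.count x = 1) (h2 : ∀ x ∉ q, w.count x = 0 ∨ w.count x = 2)
    (h3 : ∀ x, ∀ y ∈ q, ¬ [x, x, y].Sublist w)
    (h4 : ∀ x y, x ≠ y → ¬ [x, y, y, x].Sublist w) : ∃ d r, Fill q r d w := by
  induction w generalizing q with
  | nil =>
    simp at hq; subst hq
    exact ⟨[], [], .nil⟩
  | cons x w ih =>
    by_cases hx : x ∈ q
    · cases hq with
      | cons _ hq =>
        have := h1 x hx
        simp at this
        exact absurd (hq.subset hx) (List.count_eq_zero.1 this)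
      | @cons_cons q _ _ hq =>
        have hxw : w.count x = 0 := by have := h1 x hx; simpa using this
        have hxw' := List.count_eq_zero.1 hxw
        have hxq : x ∉ q := fun h => hxw' (hq.subset h)
        obtain ⟨d, r, h⟩ := ih q hq
          (fun y hy => by
            have := h1 y (by simp [hy])
            rwa [List.count_cons_of_ne (by rintro rfl; exact hxq hy)] at this)
          (fun y hy => by
            by_cases e : y = x
            · subst e; exact .inl hxw
            · have := h2 y (by simp [hy, e])
              rwa [List.count_cons_of_ne (Ne.symm e)] at this)
          (fun z y hy hs => h3 z y (by simp [hy]) (.cons _ hs))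
          (fun z y hy hs => h4 z y hy (.cons _ hs))
        exact ⟨_, _, .dn h⟩
    · have hqw : q.Sublist w := by
        cases hq with
        | cons _ hq => exact hq
        | cons_cons _ hq => simp at hx
      have hxc : w.count x = 1 := by
        have := h2 x hx
        simp at this; exact this
      have hxw : x ∈ w := by
        by_contra h; rw [List.count_eq_zero.2 h] at hxc; omega
      obtain ⟨u, v, rfl⟩ := List.append_of_mem hxw
      have hqu : q.Sublist u := by
        obtain ⟨q1, q2, rfl, hs1, hs2⟩ := List.sublist_append_iff.1 hqw
        cases q2 with
        | nil => simpa using hs1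
        | cons y q2 =>
          exfalso
          have hyx : y ≠ x := by rintro rfl; simp at hx
          have hyv : y ∈ v := by
            have := hs2.subset (List.mem_cons_self (a := y) (l := q2))
            simpa [hyx] using this
          refine h3 x y (by simp) (.cons_cons _ ?_)
          refine List.Sublist.trans ?_ (List.sublist_append_right _ _)
          exact .cons_cons _ (List.singleton_sublist.2 hyv)
      obtain ⟨d, r, h⟩ := ih (q ++ [x])
          (hqu.append (List.singleton_sublist.2 (by simp)))
          (fun y hy => by
            rcases List.mem_append.1 hy with hy | hy
            · have := h1 y hy
              rwa [List.count_cons_of_ne (by rintro rfl; exact hx hy)] at this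
            · simp at hy; subst hy; exact hxc)
          (fun y hy => by
            have := h2 y (by simp at hy; exact hy.1)
            rwa [List.count_cons_of_ne (by rintro rfl; simp at hy)] at this)
          (fun z y hy hs => by
            rcases List.mem_append.1 hy with hy | hy
            · exact h3 z y hy (.cons _ hs)
            · simp at hy; subst hy
              by_cases e : z = y
              · subst e
                have := hs.count_le z
                rw [hxc] at this; simp at this
              · exact h4 y z (Ne.symm e) (.cons_cons _ hs))
          (fun z y hy hs => h4 z y hy (.cons _ hs))
      exact ⟨_, _, .up h⟩

theorem len4 {t : List ℕ} (h : t.length = 4) : ∃ a b c d, t = [a, b, c, d] := by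
  match t, h with
  | [a, b, c, d], _ => exact ⟨a, b, c, d, rfl⟩

theorem c1221 (w : List ℕ) : Contains w [1,2,2,1] ↔ ∃ a b, a < b ∧ [a, b, b, a].Sublist w := by
  constructor
  · rintro ⟨t, ht, hl, h⟩
    obtain ⟨p, q, r, s, rfl⟩ := len4 hl
    have h1 := h 0 1 (by simp) (by simp)
    have h2 := h 1 2 (by simp) (by simp)
    have h3 := h 0 3 (by simp) (by simp)
    simp at h1 h2 h3
    obtain ⟨h2, rfl⟩ := h2
    obtain ⟨h3, rfl⟩ := h3
    exact ⟨_, _, h1.1, ht⟩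
  · rintro ⟨a, b, hab, hs⟩
    refine ⟨_, hs, rfl, ?_⟩
    intro r s hr hs
    simp at hr hs
    interval_cases r <;> interval_cases s <;> simp <;> omega

theorem c2112 (w : List ℕ) : Contains w [2,1,1,2] ↔ ∃ a b, a < b ∧ [b, a, a, b].Sublist w := by
  constructor
  · rintro ⟨t, ht, hl, h⟩
    obtain ⟨p, q, r, s, rfl⟩ := len4 hl
    have h1 := h 1 0 (by simp) (by simp)
    have h2 := h 1 2 (by simp) (by simp)
    have h3 := h 0 3 (by simp) (by simp)
    simp at h1 h2 h3
    obtain ⟨h2, rfl⟩ := h2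
    obtain ⟨h3, rfl⟩ := h3
    exact ⟨_, _, h1.1, ht⟩
  · rintro ⟨a, b, hab, hs⟩
    refine ⟨_, hs, rfl, ?_⟩
    intro r s hr hs
    simp at hr hs
    interval_cases r <;> interval_cases s <;> simp <;> omega

theorem c1123 (w : List ℕ) :
    Contains w [1,1,2,3] ↔ ∃ a b c, a < b ∧ b < c ∧ [a, a, b, c].Sublist w := by
  constructor
  · rintro ⟨t, ht, hl, h⟩
    obtain ⟨p, q, r, s, rfl⟩ := len4 hl
    have h1 := h 0 1 (by simp) (by simp)
    have h2 := h 1 2 (by simp) (by simp)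
    have h3 := h 2 3 (by simp) (by simp)
    simp at h1 h2 h3
    obtain ⟨h1, rfl⟩ := h1
    exact ⟨_, _, _, h2.1, h3.1, ht⟩
  · rintro ⟨a, b, c, hab, hbc, hs⟩
    refine ⟨_, hs, rfl, ?_⟩
    intro r s hr hs
    simp at hr hs
    interval_cases r <;> interval_cases s <;> simp <;> omega

theorem c1322 (w : List ℕ) :
    Contains w [1,3,2,2] ↔ ∃ a b c, a < b ∧ b < c ∧ [a, c, b, b].Sublist w := by
  constructor
  · rintro ⟨t, ht, hl, h⟩
    obtain ⟨p, q, r, s, rfl⟩ := len4 hl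
    have h1 := h 0 2 (by simp) (by simp)
    have h2 := h 2 1 (by simp) (by simp)
    have h3 := h 2 3 (by simp) (by simp)
    simp at h1 h2 h3
    obtain ⟨h3, rfl⟩ := h3
    exact ⟨_, _, _, h1.1, h2.1, ht⟩
  · rintro ⟨a, b, c, hab, hbc, hs⟩
    refine ⟨_, hs, rfl, ?_⟩
    intro r s hr hs
    simp at hr hs
    interval_cases r <;> interval_cases s <;> simp <;> omega

theorem c2331 (w : List ℕ) :
    Contains w [2,3,3,1] ↔ ∃ a b c, a < b ∧ b < c ∧ [b, c, c, a].Sublist w := by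
  constructor
  · rintro ⟨t, ht, hl, h⟩
    obtain ⟨p, q, r, s, rfl⟩ := len4 hl
    have h1 := h 3 0 (by simp) (by simp)
    have h2 := h 0 1 (by simp) (by simp)
    have h3 := h 1 2 (by simp) (by simp)
    simp at h1 h2 h3
    obtain ⟨h3, rfl⟩ := h3
    exact ⟨_, _, _, h1.1, h2.1, ht⟩
  · rintro ⟨a, b, c, hab, hbc, hs⟩
    refine ⟨_, hs, rfl, ?_⟩
    intro r s hr hs
    simp at hr hs
    interval_cases r <;> interval_cases s <;> simp <;> omega

def LL (n k : ℕ) : List ℕ := (List.range' (k + 1) (n - k)).reverse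
def SS (k : ℕ) : List ℕ := (List.range' 1 (k - 1)).reverse
def pi (n k : ℕ) : List ℕ := LL n k ++ (SS k ++ [k])

theorem mem_LL {n k x} : x ∈ LL n k ↔ k < x ∧ x ≤ n := by
  simp only [LL, List.mem_reverse, List.mem_range'_1]; omega

theorem mem_SS {k x} : x ∈ SS k ↔ 1 ≤ x ∧ x < k := by
  simp only [SS, List.mem_reverse, List.mem_range'_1]; omega

theorem mem_pi {n k x} (hk : 1 ≤ k) (hkn : k ≤ n) : x ∈ pi n k ↔ 1 ≤ x ∧ x ≤ n := by
  simp only [pi, List.mem_append, mem_LL, mem_SS, List.mem_singleton]; omega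

theorem pw (n k : ℕ) : (LL n k ++ SS k).Pairwise (· > ·) := by
  rw [List.pairwise_append]
  refine ⟨?_, ?_, ?_⟩
  · rw [LL, List.pairwise_reverse]; exact List.pairwise_lt_range'
  · rw [SS, List.pairwise_reverse]; exact List.pairwise_lt_range'
  · intro a ha b hb
    rw [mem_LL] at ha; rw [mem_SS] at hb; omega

theorem pi_nodup (n k : ℕ) : (pi n k).Nodup := by
  rw [pi, ← List.append_assoc, List.nodup_append]
  refine ⟨(pw n k).imp (fun h => Nat.ne_of_gt h), by simp, ?_⟩
  intro a ha b hb
  simp at hb ha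
  rw [mem_LL, mem_SS] at ha; omega

theorem pi_count {n k} (hk : 1 ≤ k) (hkn : k ≤ n) (x : ℕ) :
    (pi n k).count x = if 1 ≤ x ∧ x ≤ n then 1 else 0 := by
  rw [List.Nodup.count (pi_nodup n k)]
  simp only [mem_pi hk hkn]

theorem pi_length {n k} (hk : 1 ≤ k) (hkn : k ≤ n) : (pi n k).length = n := by
  simp [pi, LL, SS]; omega

theorem pi_inj {n k k'} (h : pi n k = pi n k') : k = k' := by
  have := congrArg List.getLast? h
  simpa [pi] using this

theorem desc_sub {l : List ℕ} (h : l.Pairwise (· > ·)) {x y} (hx : x ∈ l) (hy : y ∈ l)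
    (hxy : x < y) : [y, x].Sublist l := by
  obtain ⟨u, v, rfl⟩ := List.append_of_mem hy
  rw [List.pairwise_append] at h
  have hxv : x ∈ v := by
    rcases List.mem_append.1 hx with hx | hx
    · have := h.2.2 x hx y (by simp); omega
    · rcases List.mem_cons.1 hx with rfl | hx
      · omega
      · exact hx
  exact (List.Sublist.cons_cons _ (List.singleton_sublist.2 hxv)).trans
    (List.sublist_append_right _ _)

theorem pi_sub {n k x y} (hk : 1 ≤ k) (hkn : k ≤ n) (hx : x ∈ pi n k) (hy : y ∈ pi n k)
    (hyk : y ≠ k) (hxy : x < y) : [y, x].Sublist (pi n k) := by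
  rw [pi, ← List.append_assoc] at *
  have hy' : y ∈ LL n k ++ SS k := by
    rcases List.mem_append.1 hy with h | h
    · exact h
    · simp at h; exact absurd h hyk
  rcases List.mem_append.1 hx with h | h
  · exact (desc_sub (pw n k) h hy' hxy).trans (List.sublist_append_left _ _)
  · exact (List.singleton_sublist.2 hy').append (List.singleton_sublist.2 h)

theorem pi_unique {n : ℕ} {r : List ℕ} (hn : 1 ≤ n)
    (hc : ∀ x, r.count x = if 1 ≤ x ∧ x ≤ n then 1 else 0)
    (h1 : ∀ a b c, a < b → b < c → ¬ [a, b, c].Sublist r)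
    (h2 : ∀ a b c, a < b → b < c → ¬ [a, c, b].Sublist r)
    (h3 : ∀ a b c, a < b → b < c → ¬ [b, c, a].Sublist r) :
    ∃ k, 1 ≤ k ∧ k ≤ n ∧ r = pi n k := by
  have hnd : r.Nodup := List.nodup_iff_count_le_one.2 fun x => by rw [hc]; split <;> omega
  have hmem : ∀ x, x ∈ r ↔ 1 ≤ x ∧ x ≤ n := fun x => by
    rw [← List.count_pos_iff, hc]; split <;> simp_all
  rcases List.eq_nil_or_concat r with rfl | ⟨s, k, rfl⟩
  · have := hc 1; simp at this; omega
  · rw [List.concat_eq_append] at *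
    have hk := (hmem k).1 (by simp)
    refine ⟨k, hk.1, hk.2, ?_⟩
    rw [pi, ← List.append_assoc]
    congr 1
    have hnd' := List.nodup_append.1 hnd
    have hp : s.Pairwise (· > ·) := by
      rw [List.pairwise_iff_forall_sublist]
      intro a b hab
      have h3' : [a, b, k].Sublist (s ++ [k]) := hab.append (List.Sublist.refl [k])
      have hnd3 := hnd.sublist h3'
      simp at hnd3
      by_contra hlt
      have hlt : a < b := by omega
      rcases lt_or_ge b k with hb | hb
      · exact h1 a b k hlt hb h3'
      · rcases lt_or_ge a k with ha | ha
        · exact h2 a k b ha (by omega) h3'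
        · exact h3 k a b (by omega) hlt h3'
    refine List.Perm.eq_of_pairwise (le := (· > ·)) ?_ hp (pw n k) ?_
    · intro a b _ _ h h'; omega
    · rw [List.perm_ext_iff_of_nodup hnd'.1 ((pw n k).imp (fun h => Nat.ne_of_gt h))]
      intro x
      rw [List.mem_append, mem_LL, mem_SS]
      have := hmem x
      simp at this
      have hks : k ∉ s := fun h => hnd'.2.2 k h k (by simp) rfl
      constructor
      · intro hx
        have hxk : x ≠ k := by rintro rfl; exact hks hx
        have := this.1 (.inl hx); omega
      · intro hx
        have := this.2 (by omega)
        rcases this with h | h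
        · exact h
        · omega

theorem Run.noR {q d w} (h : Fill q [] d w) : d = List.replicate q.length D :=
  hgt_noU h.height (by simpa using h.countU)

theorem Run.zz {c q R k d w} (h : Fill (c :: q) (R ++ [k]) d w) :
    [c, k, k].Sublist w ∨
      d = List.replicate (R.length + 1) U ++ List.replicate (q.length + R.length + 2) D := by
  induction R generalizing q d w with
  | nil =>
    cases h with
    | dn h => exact .inl (.cons_cons _ (h.dbl_last (t := []) (by simp)))
    | up h => right; rw [h.noR]; simp
  | cons x R ih =>
    cases h with
    | dn h =>
      exact .inl (.cons_cons _ (h.dbl_last (t := []) (by simp)))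
    | up h =>
      rcases ih (by simpa using h) with h | h
      · exact .inl (.cons _ h)
      · right
        rw [h, List.length_cons, List.replicate_succ (n := R.length + 1), List.cons_append]
        simp; omega

theorem cond {n k d w} (hk : 1 ≤ k) (hkn : k ≤ n) (h : Fill [] (pi n k) d w)
    (hc : ∀ a c, a < k → k < c → ¬ [a, c, k, k].Sublist w) : d ∈ E n (n - k) := by
  have hU := h.countU
  rw [pi_length hk hkn] at hU
  obtain ⟨p, r, rfl, hp⟩ := split_exists (d := d) (m := n - k) (by omega)
  obtain ⟨Q, R, w1, w2, rfl, hr1, hr2⟩ := h.split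
  obtain ⟨s, t, e1, e2, e3, e4, -, -⟩ := hr1.state
  have hh := hr1.height
  obtain ⟨rfl, rfl⟩ := List.append_inj e2 (by simp [LL]; omega)
  simp only [List.nil_append, pi] at e1
  rw [← List.append_assoc s] at e1
  have e1 := (List.append_inj_left' e1 rfl)
  cases Q with
  | nil =>
    left
    exact ⟨(p, U :: r), ⟨⟨hh, hp⟩, hr2.height, by
      have := hr2.countU; rw [this]; simp [SS]; omega⟩, rfl⟩
  | cons c q =>
    have hcL : c ∈ LL n k := by rw [e1]; simp
    rw [mem_LL] at hcL
    right
    refine ⟨p, ⟨hp, _, hh⟩, ?_⟩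
    have hcnt := hgt_count hh
    have key : U :: r = List.replicate ((SS k).length + 1) U ++
        List.replicate (q.length + (SS k).length + 2) D := by
      cases eS : SS k with
      | nil =>
        rw [eS] at hr2
        rcases hr2.zz with h | h
        · cases hr2 with
          | up hr2 => rw [hr2.noR]; simp
        · exact h
      | cons a S =>
        have ha : a ∈ SS k := by simp [eS]
        rw [mem_SS] at ha
        rw [eS] at hr2
        cases hr2 with
        | up hr2 =>
          rcases Run.zz (q := q ++ [a]) (by simpa using hr2) with h | h
          · exfalso
            exact hc a c ha.2 hcL.1 ((List.Sublist.cons_cons _ h).trans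
              (List.sublist_append_right _ _))
          · rw [h, List.length_cons, List.replicate_succ (n := S.length + 1), List.cons_append]
            simp; omega
    have e5 : (SS k).length = k - 1 := by simp [SS]
    simp at hcnt
    rw [key, comp, e5]
    congr 3 <;> omega

theorem cond' {n k d w} (hk : 1 ≤ k) (hkn : k ≤ n) (h : Fill [] (pi n k) d w)
    (hd : d ∈ E n (n - k)) (a c : ℕ) (ha : a < k) (hc : k < c) :
    ¬ [a, c, k, k].Sublist w := by
  intro hs
  have hcnt := h.count k
  rw [pi_count hk hkn] at hcnt
  have key : ∃ p r, d = p ++ r ∧ p.count U = n - k ∧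
      (hgt 0 p = some 0 ∨ ∃ j, r = List.replicate k U ++ List.replicate j D) := by
    rcases hd with ⟨⟨p, r⟩, ⟨⟨h1, h2⟩, -⟩, rfl⟩ | ⟨p, ⟨h1, -⟩, rfl⟩
    · exact ⟨p, r, rfl, h2, .inl h1⟩
    · exact ⟨p, _, rfl, h1, .inr ⟨n - p.count D, by congr 2; omega⟩⟩
  obtain ⟨p, r, rfl, hp, hor⟩ := key
  obtain ⟨Q, R, w1, w2, rfl, hr1, hr2⟩ := h.split
  obtain ⟨s, t, e1, e2, e3, e4, e5, -⟩ := hr1.state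
  have hh := hr1.height
  obtain ⟨rfl, rfl⟩ := List.append_inj e2 (by simp [LL]; omega)
  simp only [List.nil_append, pi] at e1
  rw [← List.append_assoc s] at e1
  have e1 := (List.append_inj_left' e1 rfl)
  have haw : a ∉ w1 := by
    intro h
    have : a ∈ LL n k := by
      rcases e5 a h with h | h
      · rw [e1]; simp [h]
      · exact h
    rw [mem_LL] at this; omega
  have hs2 : [a, c, k, k].Sublist w2 := by
    obtain ⟨l1, l2, e, h1, h2⟩ := List.sublist_append_iff.1 hs
    cases l1 with
    | nil => simp at e; rw [e]; exact h2
    | cons x l1 =>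
      simp at e
      exact absurd (h1.subset (by simp [e.1])) haw
  rcases hor with h0 | ⟨j, rfl⟩
  · rw [List.length_nil, h0] at hh
    have : Q = [] := by simpa using hh.symm
    subst this
    obtain ⟨s, t, e1, e2, -, -, e5, -⟩ := hr2.state
    simp at e1 e2
    subst e1 e2
    have := e5 c (hs2.subset (by simp))
    simp [mem_SS] at this
    omega
  · obtain ⟨Q', R', w3, w4, rfl, hr3, hr4⟩ := hr2.split
    obtain ⟨s, t, f1, f2, f3, f4, f5, f6⟩ := hr3.state
    simp [List.count_replicate] at f3 f4
    subst f3
    have hR : R' = [] := by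
      have := congrArg List.length f2
      simp [SS] at this
      rw [← List.length_eq_zero_iff]; omega
    subst hR
    simp at f2
    subst f2
    have hc3 : c ∉ w3 := by
      intro h
      have := f5 c h
      simp [mem_SS] at this; omega
    have hk3 : 1 ≤ w3.count k := by rw [f6]; simp
    have hk4 : 2 ≤ w4.count k := by
      obtain ⟨l1, l2, e, h1, h2⟩ := List.sublist_append_iff.1 hs2
      have hc1 : c ∉ l1 := fun h => hc3 (h1.subset h)
      refine two_le_count (List.Sublist.trans ?_ h2)
      match l1, e, hc1 with
      | [], e, _ => simp at e; subst e; simp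
      | [x], e, _ => simp at e; obtain ⟨-, rfl⟩ := e; simp
      | x :: y :: l, e, hc1 => simp at e; simp [e.2.1] at hc1
    simp at hcnt
    split at hcnt <;> omega

/-- Main characterization. -/
theorem charac {n : ℕ} (hn : 1 ≤ n) (w : List ℕ) :
    (IsNonnesting n w ∧ Avoids w [1,1,2,3] ∧ Avoids w [1,3,2,2] ∧ Avoids w [2,3,3,1]) ↔
    ∃ k d, (1 ≤ k ∧ k ≤ n) ∧ d ∈ E n (n - k) ∧ Fill [] (pi n k) d w := by
  simp only [IsNonnesting, Avoids, c1221, c2112, c1123, c1322, c2331]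
  push Not
  constructor
  · rintro ⟨⟨hm, g1, g2⟩, g3, g4, g5⟩
    obtain ⟨d, r, h⟩ := decode w [] (by simp) (by simp)
      (fun x _ => by rw [hm x]; split <;> simp) (by simp)
      (fun x y hxy => by
        rcases lt_or_gt_of_ne hxy with h | h
        · exact g1 x y h
        · exact g2 y x h)
    obtain ⟨k, hk, hkn, rfl⟩ := pi_unique (n := n) (r := r) hn
      (fun x => by
        have := h.count x
        rw [hm x] at this
        split at this <;> simp at this ⊢ <;> simp_all <;> omega)
      (fun a b c hab hbc hs => g3 a b c hab hbc (h.dbl_first hs))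
      (fun a b c hab hbc hs => g4 a b c hab hbc (h.dbl_last (t := [a, c]) hs))
      (fun a b c hab hbc hs => g5 a b c hab hbc (h.dbl_mid hs))
    exact ⟨k, d, ⟨hk, hkn⟩, cond hk hkn h (fun a c ha hc => g4 a k c ha hc), h⟩
  · rintro ⟨k, d, ⟨hk, hkn⟩, hd, h⟩
    have hnd : ([] ++ pi n k).Nodup := pi_nodup n k
    have hm : ∀ x ∈ w, x ∈ pi n k := by
      intro x hx
      have := h.count x
      rw [← List.count_pos_iff] at hx ⊢
      simp at this; omega
    refine ⟨⟨fun x => ?_, fun a b _ => h.n2 hnd, fun a b _ => h.n2 hnd⟩, ?_, ?_, ?_⟩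
    · rw [h.count x, pi_count hk hkn]; split <;> simp
    · intro a b c hab hbc hs
      have ma := hm a (hs.subset (by simp))
      have mb := hm b (hs.subset (by simp))
      have mc := hm c (hs.subset (by simp))
      by_cases e : c = k
      · exact h.n3 hnd (pi_sub hk hkn ma mb (by omega) hab)
          (List.Sublist.trans (by simp) hs)
      · refine h.n3 hnd (pi_sub hk hkn ma mc e (by omega)) (List.Sublist.trans ?_ hs)
        exact .cons_cons _ (.cons_cons _ (.cons _ (.refl _)))
    · intro a b c hab hbc hs
      have ma := hm a (hs.subset (by simp))
      have mb := hm b (hs.subset (by simp))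
      by_cases e : b = k
      · subst e; exact cond' hk hkn h hd a c hab hbc hs
      · refine h.n4 hnd (pi_sub hk hkn ma mb e hab) (List.Sublist.trans ?_ hs)
        exact .cons_cons _ (.cons _ (.refl _))
    · intro a b c hab hbc hs
      have ma := hm a (hs.subset (by simp))
      have mb := hm b (hs.subset (by simp))
      have mc := hm c (hs.subset (by simp))
      by_cases e : c = k
      · subst e
        refine h.n3 (x := c) (y := a) hnd ?_ (List.Sublist.trans ?_ hs)
        · rw [pi, ← List.append_assoc] at *
          refine List.Sublist.append (l₁ := [a]) (List.singleton_sublist.2 ?_) (List.Sublist.refl _)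
          simp at ma
          rcases ma with h | h | h
          · simp [h]
          · simp [h]
          · omega
        · exact .cons _ (.refl _)
      · refine h.n4 hnd (pi_sub hk hkn mb mc e hbc) (List.Sublist.trans ?_ hs)
        exact .cons_cons _ (.cons_cons _ (.cons_cons _ (.cons _ (.refl _))))

theorem ncard_main {n : ℕ} :
    {w : List ℕ | ∃ k d, (1 ≤ k ∧ k ≤ n) ∧ d ∈ E n (n - k) ∧ Fill [] (pi n k) d w}.ncard =
      ∑ m ∈ Finset.range n, (E n m).ncard := by
  classical
  have hfin : ∀ m, m < n → (E n m).Finite := fun m hm => (DP_finite n).subset (E_sub hm)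
  let F : ℕ → Finset (List DyckStep) := fun m => if h : m < n then (hfin m h).toFinset else ∅
  have hF : ∀ m, m < n → ∀ d, d ∈ F m ↔ d ∈ E n m := by
    intro m hm d; simp [F, hm]
  have hFc : ∀ m, m < n → (F m).card = (E n m).ncard := by
    intro m hm
    simp only [F, hm, dif_pos]
    exact (Set.ncard_eq_toFinset_card _ _).symm
  let T : Finset (Σ _ : ℕ, List DyckStep) := (Finset.range n).sigma F
  have hT : T.card = ∑ m ∈ Finset.range n, (E n m).ncard := by
    rw [Finset.card_sigma]
    exact Finset.sum_congr rfl fun m hm => hFc m (Finset.mem_range.1 hm)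
  have hex : ∀ x ∈ (T : Set (Σ _ : ℕ, List DyckStep)), ∃ w, Fill [] (pi n (n - x.1)) x.2 w := by
    rintro ⟨m, d⟩ hx
    simp only [T, Finset.coe_sigma, Set.mem_sigma_iff, Finset.coe_range, Set.mem_Iio,
      Finset.mem_coe] at hx
    have hd := E_sub hx.1 ((hF m hx.1 d).1 hx.2)
    exact Run.exists (by simpa using hd.1) (by rw [pi_length (by simp; omega) (by simp)]; exact hd.2)
  choose f hf using hex
  rw [← hT, ← Set.ncard_coe_finset]
  symm
  have hmem : ∀ x : (Σ _ : ℕ, List DyckStep), x ∈ (T : Set (Σ _ : ℕ, List DyckStep)) ↔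
      x.1 < n ∧ x.2 ∈ E n x.1 := by
    rintro ⟨m, d⟩
    simp only [T, Finset.coe_sigma, Set.mem_sigma_iff, Finset.coe_range, Set.mem_Iio,
      Finset.mem_coe]
    exact ⟨fun h => ⟨h.1, (hF m h.1 d).1 h.2⟩, fun h => ⟨h.1, (hF m h.1 d).2 h.2⟩⟩
  refine Set.ncard_congr f ?_ ?_ ?_
  · intro x hx
    have h := (hmem x).1 hx
    refine ⟨n - x.1, x.2, by omega, ?_, hf x hx⟩
    rw [show n - (n - x.1) = x.1 by omega]; exact h.2
  · rintro ⟨m, d⟩ ⟨m', d'⟩ hx hx' e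
    have h := (hmem _).1 hx
    have h' := (hmem _).1 hx'
    have r1 := hf _ hx
    have r2 := hf _ hx'
    rw [← e] at r2
    obtain ⟨h1, h2⟩ := r1.inj r2 (pi_nodup _ _) (pi_nodup _ _)
    have := pi_inj h1
    simp only at this h h' h2
    have : m = m' := by omega
    subst this h2
    rfl
  · rintro w ⟨k, d, hk, hd, hw⟩
    have hx : (⟨n - k, d⟩ : Σ _ : ℕ, List DyckStep) ∈ (T : Set (Σ _ : ℕ, List DyckStep)) :=
      (hmem _).2 ⟨by simp only; omega, hd⟩
    refine ⟨_, hx, ?_⟩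
    have := hf _ hx
    simp only [show n - (n - k) = k by omega] at this
    exact this.inj_w hw

end NN

theorem nonnesting_avoid_1123_1322_2331 (n : ℕ) (hn : 1 ≤ n) :
    {w : List ℕ | IsNonnesting n w ∧
      Avoids w [1,1,2,3] ∧ Avoids w [1,3,2,2] ∧ Avoids w [2,3,3,1]}.ncard =
      catalan (n + 1) - 1 := by
  simp only [NN.charac hn]
  rw [NN.ncard_main, ← NN.total n, Nat.add_sub_cancel]
end
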